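/- arXiv:1804.06639 — 2 statements merged into one kernel-verified Lean document; each statement's English description precedes it below -/
import Mathlib

section
/- Let F be a Minkowski norm on ℝⁿ, let Ω ⊆ ℝⁿ be an open set with smooth boundary such that Ω^c is bounded, let 1 < p < n, and let v_p be the positive C¹ weak solution of div(F(∇v)^{p−1} F_ξ(∇v)) = 0 in Ω with v_p = 1 on ∂Ω and v_p → 0 at infinity. If W_r(x₀) ⊆ Ω^c ⊆ W_s(y₀), then for all x ∈ Ω∖{y₀}: (r/F^o(x−x₀))^{(n−p)/(p−1)} ≤ v_p(x) ≤ (s/F^o(x−y₀))^{(n−p)/(p−1)}. -/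
open MeasureTheory Filter Topology Metric Set
open scoped RealInnerProductSpace NNReal

noncomputable section

abbrev En (n : ℕ) := EuclideanSpace ℝ (Fin n)

/-- A Minkowski norm on ℝⁿ: a norm (convex, even, 1-homogeneous, positive away from 0)
which is smooth away from the origin and whose Hessian of `F²/2` is positive definite
on `ℝⁿ \ {0}`. -/
structure MinkowskiNorm (n : ℕ) where
  F : En n → ℝ
  convexOn : ConvexOn ℝ Set.univ F
  even : ∀ ξ, F (-ξ) = F ξ
  homog : ∀ c : ℝ, 0 ≤ c → ∀ ξ, F (c • ξ) = c * F ξ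
  pos : ∀ ξ : En n, ξ ≠ 0 → 0 < F ξ
  smooth : ContDiffOn ℝ (⊤ : ℕ∞) F {(0 : En n)}ᶜ
  elliptic : ∀ ξ : En n, ξ ≠ 0 → ∀ v : En n, v ≠ 0 →
    0 < fderiv ℝ (fun x => fderiv ℝ (fun y => F y ^ 2 / 2) x) ξ v v

/-- Locally Lipschitz on a set (i.e. `C^{0,1}_loc`). -/
def LocLipOn {n : ℕ} (f : En n → ℝ) (s : Set (En n)) : Prop :=
  ∀ x ∈ s, ∃ (K : ℝ≥0) (t : Set (En n)), t ∈ nhdsWithin x s ∧ LipschitzOnWith K f t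

/-- Weak solution of `div(F_ξ(∇u)) = F(∇u)` in `Ω` in the sense of Huisken–Ilmanen's
minimization principle. -/
def IsWeakSolIAMCF {n : ℕ} (N : MinkowskiNorm n) (Ω : Set (En n)) (u : En n → ℝ) : Prop :=
  LocLipOn u Ω ∧
  ∀ K : Set (En n), IsCompact (closure K) → closure K ⊆ Ω →
    ∀ φ : En n → ℝ, LocLipOn φ Ω → (∀ x ∈ Ω \ K, φ x = u x) →
      (∫ x in K, (N.F (gradient u x) + u x * N.F (gradient u x))) ≤
        ∫ x in K, (N.F (gradient φ x) + φ x * N.F (gradient u x))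

/-- Weak subsolution: the minimization inequality holds for competitors `φ ≤ u`. -/
def IsWeakSubSolIAMCF {n : ℕ} (N : MinkowskiNorm n) (Ω : Set (En n)) (u : En n → ℝ) : Prop :=
  LocLipOn u Ω ∧
  ∀ K : Set (En n), IsCompact (closure K) → closure K ⊆ Ω →
    ∀ φ : En n → ℝ, LocLipOn φ Ω → (∀ x ∈ Ω \ K, φ x = u x) → (∀ x ∈ Ω, φ x ≤ u x) →
      (∫ x in K, (N.F (gradient u x) + u x * N.F (gradient u x))) ≤
        ∫ x in K, (N.F (gradient φ x) + φ x * N.F (gradient u x))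

/-- Weak supersolution: the minimization inequality holds for competitors `φ ≥ u`. -/
def IsWeakSuperSolIAMCF {n : ℕ} (N : MinkowskiNorm n) (Ω : Set (En n)) (u : En n → ℝ) : Prop :=
  LocLipOn u Ω ∧
  ∀ K : Set (En n), IsCompact (closure K) → closure K ⊆ Ω →
    ∀ φ : En n → ℝ, LocLipOn φ Ω → (∀ x ∈ Ω \ K, φ x = u x) → (∀ x ∈ Ω, u x ≤ φ x) →
      (∫ x in K, (N.F (gradient u x) + u x * N.F (gradient u x))) ≤
        ∫ x in K, (N.F (gradient φ x) + φ x * N.F (gradient u x))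

/-- A smooth compactly supported test function on `Ω`. -/
def IsTestFun {n : ℕ} (Ω : Set (En n)) (ψ : En n → ℝ) : Prop :=
  ContDiff ℝ (⊤ : ℕ∞) ψ ∧ HasCompactSupport ψ ∧ tsupport ψ ⊆ Ω

/-- Weak solution of the Finsler `p`-Laplace equation `div(F(∇v)^{p-1} F_ξ(∇v)) = 0` in `Ω`. -/
def IsWeakPHarmonic {n : ℕ} (N : MinkowskiNorm n) (Ω : Set (En n)) (p : ℝ)
    (v : En n → ℝ) : Prop :=
  ∀ ψ : En n → ℝ, IsTestFun Ω ψ →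
    (∫ x in Ω, N.F (gradient v x) ^ (p - 1) *
      ⟪gradient N.F (gradient v x), gradient ψ x⟫) = 0

/-- Weak solution of `div(F(∇u)^{p-1} F_ξ(∇u)) = F(∇u)^p` in `Ω`. -/
def IsWeakPSol {n : ℕ} (N : MinkowskiNorm n) (Ω : Set (En n)) (p : ℝ)
    (u : En n → ℝ) : Prop :=
  ∀ ψ : En n → ℝ, IsTestFun Ω ψ →
    (∫ x in Ω, N.F (gradient u x) ^ (p - 1) *
      ⟪gradient N.F (gradient u x), gradient ψ x⟫) =
      - ∫ x in Ω, N.F (gradient u x) ^ p * ψ x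

/-- The polar (dual) norm `F^o(x) = sup_{ξ ≠ 0} ⟨ξ, x⟩ / F(ξ)`. -/
def polarF {n : ℕ} (N : MinkowskiNorm n) (x : En n) : ℝ :=
  sSup {c : ℝ | ∃ ξ : En n, ξ ≠ 0 ∧ c = ⟪ξ, x⟫ / N.F ξ}

/-- The Wulff shape of radius `r` centered at `x₀`: `{x : F^o(x - x₀) < r}`. -/
def Wulff {n : ℕ} (N : MinkowskiNorm n) (r : ℝ) (x₀ : En n) : Set (En n) :=
  {x | polarF N (x - x₀) < r}

/-- `Ω` is an open set with smooth boundary: it is a smooth sublevel set of a smooth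
function with nonvanishing gradient on the boundary. -/
def HasSmoothBoundary {n : ℕ} (Ω : Set (En n)) : Prop :=
  ∃ f : En n → ℝ, ContDiff ℝ (⊤ : ℕ∞) f ∧ Ω = {x | f x < 0} ∧
    ∀ x ∈ frontier Ω, fderiv ℝ f x ≠ 0

/-- `C¹` on `s` with locally Hölder continuous gradient (i.e. `C^{1,α}_loc`). -/
def C1LocHolderOn {n : ℕ} (v : En n → ℝ) (s : Set (En n)) : Prop :=
  ContDiffOn ℝ 1 v s ∧
  ∀ x ∈ s, ∃ (α C : ℝ≥0), 0 < α ∧ (α : ℝ) ≤ 1 ∧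
    ∃ t ∈ nhdsWithin x s, HolderOnWith C α (fun y => gradient v y) t

/-- Divergence of a vector field on `ℝⁿ`. -/
def divg {n : ℕ} (V : En n → En n) (x : En n) : ℝ :=
  ∑ i : Fin n, fderiv ℝ V x (EuclideanSpace.single i 1) i
lemma continuous_of_zero_off {E G : Type*} [TopologicalSpace E] [TopologicalSpace G] [Zero G]
    {U K : Set E} (hU : IsOpen U) (hK : IsClosed K) (hKU : K ⊆ U) {f : E → G}
    (hf : ContinuousOn f U) (h0 : ∀ x, x ∉ K → f x = 0) : Continuous f := by
  rw [continuous_iff_continuousAt]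
  intro x
  by_cases hx : x ∈ K
  · exact hf.continuousAt (hU.mem_nhds (hKU hx))
  · have : f =ᶠ[𝓝 x] fun _ => 0 := by
      filter_upwards [hK.isOpen_compl.mem_nhds hx] with y hy using h0 y hy
    exact (continuousAt_const).congr this.symm

lemma inner_gradient_eq {n : ℕ} (f : En n → ℝ) (x y : En n) :
    ⟪gradient f x, y⟫ = fderiv ℝ f x y := by
  rw [← InnerProductSpace.toDual_apply_apply (𝕜 := ℝ), toDual_gradient]

lemma exists_smooth_approx {n : ℕ} {φ : En n → ℝ} (hφ : ContDiff ℝ 1 φ)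
    (hc : HasCompactSupport φ) {δ ε : ℝ} (hδ : 0 < δ) (hε : 0 < ε) :
    ∃ ψ : En n → ℝ, ContDiff ℝ (⊤ : ℕ∞) ψ ∧ tsupport ψ ⊆ cthickening δ (tsupport φ) ∧
      ∀ x, ‖fderiv ℝ ψ x - fderiv ℝ φ x‖ ≤ ε := by
  have huc : UniformContinuous (fderiv ℝ φ) :=
    (hφ.continuous_fderiv (by norm_num)).uniformContinuous_of_tendsto_cocompact
      (HasCompactSupport.is_zero_at_infty (hc.fderiv (𝕜 := ℝ)))
  obtain ⟨η, hη, hηε⟩ := Metric.uniformContinuous_iff.mp huc ε hε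
  set ρ := min δ η with hρ
  have hρ0 : 0 < ρ := lt_min hδ hη
  set b : ContDiffBump (0 : En n) := ⟨ρ / 2, ρ, half_pos hρ0, half_lt_self hρ0⟩
  set ψ : En n → ℝ := convolution (b.normed volume) φ (ContinuousLinearMap.lsmul ℝ ℝ) volume
    with hψ
  refine ⟨ψ, ?_, ?_, ?_⟩
  · exact b.hasCompactSupport_normed.contDiff_convolution_left _ b.contDiff_normed
      hφ.continuous.locallyIntegrable
  · refine closure_minimal ?_ isClosed_cthickening
    refine (support_convolution_subset _).trans ?_
    rintro _ ⟨y, hy, z, hz, rfl⟩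
    rw [b.support_normed_eq] at hy
    have hy' : dist y 0 < ρ := hy
    refine mem_cthickening_of_dist_le _ z _ _ (subset_tsupport _ hz) ?_
    have : dist (y + z) z = dist y 0 := by simp [dist_eq_norm]
    rw [this]
    exact hy'.le.trans (min_le_left _ _)
  · intro x
    have h1 := (hc.hasFDerivAt_convolution_right (ContinuousLinearMap.lsmul ℝ ℝ)
      (b.integrable_normed (μ := volume)).locallyIntegrable hφ x).fderiv
    have h2 : convolution (b.normed volume) (fderiv ℝ φ)
        ((ContinuousLinearMap.lsmul ℝ ℝ : ℝ →L[ℝ] ℝ →L[ℝ] ℝ).precompR (En n)) volume x =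
        convolution (b.normed volume) (fderiv ℝ φ) (ContinuousLinearMap.lsmul ℝ ℝ) volume x := by
      unfold convolution
      congr 1
    rw [hψ, h1, h2, ← dist_eq_norm]
    refine b.dist_normed_convolution_le
      (hφ.continuous_fderiv (by norm_num)).aestronglyMeasurable ?_
    intro y hy
    exact (hηε (lt_of_lt_of_le hy (min_le_right _ _))).le

lemma weak_C1 {n : ℕ} {U : Set (En n)} (hU : IsOpen U) {V : En n → En n}
    (hV : ContinuousOn V U)
    (h : ∀ ψ : En n → ℝ, IsTestFun U ψ → ∫ x, ⟪V x, gradient ψ x⟫ = 0)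
    {φ : En n → ℝ} (hφ : ContDiff ℝ 1 φ) (hc : HasCompactSupport φ) (hs : tsupport φ ⊆ U) :
    ∫ x, ⟪V x, gradient φ x⟫ = 0 := by
  obtain ⟨δ, hδ, hδU⟩ := hc.isCompact.exists_cthickening_subset_open hU hs
  set K := cthickening δ (tsupport φ) with hK
  have hKc : IsCompact K := hc.isCompact.cthickening
  obtain ⟨M, hM⟩ := hKc.exists_bound_of_continuousOn (hV.mono hδU)
  have gcont : ∀ {ψ : En n → ℝ}, ContDiff ℝ 1 ψ → Continuous (gradient ψ) := fun hψ =>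
    (InnerProductSpace.toDual ℝ (En n)).symm.continuous.comp (hψ.continuous_fderiv (by norm_num))
  have gzero : ∀ {ψ : En n → ℝ}, tsupport ψ ⊆ K → ∀ x, x ∉ K → gradient ψ x = 0 := by
    intro ψ hψ x hx
    have : fderiv ℝ ψ x = 0 := by
      by_contra hne
      exact hx (hψ (support_fderiv_subset ℝ hne))
    simp [gradient, this]
  have hintg : ∀ {ψ : En n → ℝ}, ContDiff ℝ 1 ψ → tsupport ψ ⊆ K →
      Integrable (fun x => ⟪V x, gradient ψ x⟫) := by
    intro ψ hψ hψK
    have hz : ∀ x, x ∉ K → ⟪V x, gradient ψ x⟫ = 0 := fun x hx => by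
      rw [gzero hψK x hx, inner_zero_right]
    exact (continuous_of_zero_off hU hKc.isClosed hδU
      (hV.inner (gcont hψ).continuousOn) hz).integrable_of_hasCompactSupport
      (HasCompactSupport.intro hKc hz)
  have hφK : tsupport φ ⊆ K := self_subset_cthickening _
  set vK := (volume : Measure (En n)).real K
  have hM0 : 0 ≤ |M| := abs_nonneg M
  have key : ∀ ε > 0, ‖∫ x, ⟪V x, gradient φ x⟫‖ ≤ |M| * ε * vK := by
    intro ε hε
    obtain ⟨ψ, hψ, hψK, hψε⟩ := exists_smooth_approx hφ hc hδ hε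
    have hψ1 : ContDiff ℝ 1 ψ := hψ.of_le (by exact_mod_cast le_top)
    have ht : IsTestFun U ψ := ⟨hψ, HasCompactSupport.intro' hKc hKc.isClosed
      (fun x hx => by
        by_contra hne
        exact hx (hψK (subset_tsupport _ hne))), hψK.trans hδU⟩
    have h1 : ∫ x, ⟪V x, gradient φ x⟫ = ∫ x, (⟪V x, gradient φ x⟫ - ⟪V x, gradient ψ x⟫) := by
      rw [integral_sub (hintg hφ hφK) (hintg hψ1 hψK), h ψ ht, sub_zero]
    have h2 : ∫ x, (⟪V x, gradient φ x⟫ - ⟪V x, gradient ψ x⟫) =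
        ∫ x in K, (⟪V x, gradient φ x⟫ - ⟪V x, gradient ψ x⟫) := by
      refine (setIntegral_eq_integral_of_forall_compl_eq_zero ?_).symm
      intro x hx
      rw [gzero hφK x hx, gzero hψK x hx]; simp
    rw [h1, h2]
    refine norm_setIntegral_le_of_norm_le_const hKc.measure_lt_top ?_
    intro x hx
    rw [← inner_sub_right]
    refine (norm_inner_le_norm _ _).trans ?_
    refine mul_le_mul ((hM x hx).trans (le_abs_self _)) ?_ (norm_nonneg _) hM0
    rw [gradient, gradient, ← map_sub, LinearIsometryEquiv.norm_map, norm_sub_rev]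
    exact hψε x
  have : ‖∫ x, ⟪V x, gradient φ x⟫‖ ≤ 0 := by
    refine le_of_forall_pos_le_add ?_
    intro ε hε
    have hv : 0 ≤ vK := measureReal_nonneg
    have hd : 0 < |M| * vK + 1 := by positivity
    have := key (ε / (|M| * vK + 1)) (by positivity)
    refine this.trans ?_
    rw [zero_add]
    have : |M| * (ε / (|M| * vK + 1)) * vK = ε * (|M| * vK / (|M| * vK + 1)) := by ring
    rw [this]
    refine mul_le_of_le_one_right hε.le ?_
    rw [div_le_one hd]; linarith
  exact norm_le_zero_iff.mp this
namespace MinkowskiNorm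

variable {n : ℕ} (N : MinkowskiNorm n)

lemma F_zero : N.F 0 = 0 := by
  have := N.homog 0 le_rfl 0
  simpa using this

lemma F_nonneg (ξ : En n) : 0 ≤ N.F ξ := by
  by_cases h : ξ = 0
  · rw [h, N.F_zero]
  · exact (N.pos ξ h).le

lemma F_eq_zero {ξ : En n} (h : N.F ξ = 0) : ξ = 0 := by
  by_contra hne
  exact (N.pos ξ hne).ne' h

lemma F_add_le (x y : En n) : N.F (x + y) ≤ N.F x + N.F y := by
  have h := N.convexOn.2 (mem_univ x) (mem_univ y) (show (0 : ℝ) ≤ 1 / 2 by norm_num)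
    (show (0 : ℝ) ≤ 1 / 2 by norm_num) (by norm_num)
  rw [← smul_add, N.homog _ (by norm_num)] at h
  simp only [smul_eq_mul] at h
  linarith

lemma F_continuous : Continuous N.F := by
  rw [← continuousOn_univ]
  have := N.convexOn.continuousOn_interior
  simpa using this

lemma F_bounds (hn : 0 < n) : ∃ c C : ℝ, 0 < c ∧ 0 < C ∧
    ∀ ξ, c * ‖ξ‖ ≤ N.F ξ ∧ N.F ξ ≤ C * ‖ξ‖ := by
  have : Nonempty (Fin n) := ⟨⟨0, hn⟩⟩
  have hne : (sphere (0 : En n) 1).Nonempty := NormedSpace.sphere_nonempty.mpr zero_le_one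
  have hc : IsCompact (sphere (0 : En n) 1) := isCompact_sphere _ _
  obtain ⟨a, ha, hamin⟩ := hc.exists_isMinOn hne N.F_continuous.continuousOn
  obtain ⟨b, hb, hbmax⟩ := hc.exists_isMaxOn hne N.F_continuous.continuousOn
  have nz : ∀ z ∈ sphere (0 : En n) 1, z ≠ 0 := by
    rintro z hz rfl
    simp at hz
  refine ⟨N.F a, N.F b, N.pos a (nz a ha), N.pos b (nz b hb), fun ξ => ?_⟩
  by_cases h : ξ = 0
  · simp [h, N.F_zero]
  have hpos : 0 < ‖ξ‖ := norm_pos_iff.mpr h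
  have hmem : ‖ξ‖⁻¹ • ξ ∈ sphere (0 : En n) 1 := by
    simp [norm_smul, hpos.ne']
  have hF : N.F ξ = ‖ξ‖ * N.F (‖ξ‖⁻¹ • ξ) := by
    rw [N.homog _ (inv_nonneg.mpr hpos.le), ← mul_assoc, mul_inv_cancel₀ hpos.ne', one_mul]
  have h1 : N.F a ≤ N.F (‖ξ‖⁻¹ • ξ) := hamin hmem
  have h2 : N.F (‖ξ‖⁻¹ • ξ) ≤ N.F b := hbmax hmem
  rw [hF]
  constructor <;> nlinarith

lemma F_diff {ξ : En n} (h : ξ ≠ 0) : DifferentiableAt ℝ N.F ξ :=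
  (N.smooth.contDiffAt (isOpen_compl_singleton.mem_nhds h)).differentiableAt (by simp)

lemma hasDerivAt_line {ξ : En n} (h : ξ ≠ 0) (ζ : En n) :
    HasDerivAt (fun t : ℝ => N.F (ξ + t • ζ)) (fderiv ℝ N.F ξ ζ) 0 := by
  have h1 : HasDerivAt (fun t : ℝ => ξ + t • ζ) ζ 0 := by
    simpa using ((hasDerivAt_id (0 : ℝ)).smul_const ζ).const_add ξ
  have h2 : HasFDerivAt N.F (fderiv ℝ N.F ξ) (ξ + (0 : ℝ) • ζ) := by
    simpa using (N.F_diff h).hasFDerivAt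
  exact h2.comp_hasDerivAt (0 : ℝ) h1

lemma fderiv_self {ξ : En n} (h : ξ ≠ 0) : fderiv ℝ N.F ξ ξ = N.F ξ := by
  have h1 := N.hasDerivAt_line h ξ
  have h2 : HasDerivAt (fun t : ℝ => (1 + t) * N.F ξ) (N.F ξ) 0 := by
    simpa using ((hasDerivAt_id (0 : ℝ)).const_add 1).mul_const (N.F ξ)
  refine h1.unique (h2.congr_of_eventuallyEq ?_)
  filter_upwards [Ioi_mem_nhds (show (-1 : ℝ) < 0 by norm_num)] with t ht
  have ht' : (-1 : ℝ) < t := ht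
  rw [← N.homog _ (by linarith), add_smul, one_smul]

lemma fderiv_le {ξ : En n} (h : ξ ≠ 0) (ζ : En n) : fderiv ℝ N.F ξ ζ ≤ N.F ζ := by
  have h1 := (N.hasDerivAt_line h ζ).tendsto_slope_zero_right
  refine le_of_tendsto h1 ?_
  filter_upwards [self_mem_nhdsWithin] with t ht
  have ht' : (0 : ℝ) < t := ht
  have h2 := N.F_add_le ξ (t • ζ)
  rw [N.homog t ht'.le] at h2
  simp only [zero_add, zero_smul, add_zero, smul_eq_mul]
  rw [inv_mul_le_iff₀ ht']
  linarith

lemma strict (L : En n →L[ℝ] ℝ) (hL : ∀ x, L x ≤ N.F x) {ξ ζ : En n}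
    (hξ : L ξ = N.F ξ) (hζ : L ζ = N.F ζ) (heq : N.F ξ = N.F ζ) (hpos : 0 < N.F ξ) : ξ = ζ := by
  by_contra hne
  set d := ζ - ξ with hd
  have hd0 : d ≠ 0 := sub_ne_zero.mpr (Ne.symm hne)
  set m := ξ + (1 / 2 : ℝ) • d with hm
  have hconst : ∀ t : ℝ, |t| < 1 / 2 → N.F (m + t • d) = N.F ξ := by
    intro t ht
    rw [abs_lt] at ht
    have e : m + t • d = (1 / 2 - t) • ξ + (1 / 2 + t) • ζ := by
      rw [hm, hd]; module
    rw [e]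
    apply le_antisymm
    · refine (N.convexOn.2 (mem_univ ξ) (mem_univ ζ) (by linarith) (by linarith)
        (by ring)).trans ?_
      simp only [smul_eq_mul, ← heq]
      nlinarith
    · refine le_trans ?_ (hL _)
      rw [map_add, map_smul, map_smul, hξ, hζ, ← heq]
      simp only [smul_eq_mul]
      nlinarith
  have hm0 : ∀ t : ℝ, |t| < 1 / 2 → m + t • d ≠ 0 := by
    intro t ht h0
    have := hconst t ht
    rw [h0, N.F_zero] at this
    linarith
  set G : En n → ℝ := fun y => N.F y ^ 2 / 2 with hG
  have hGs : ∀ x : En n, x ≠ 0 → ContDiffAt ℝ 2 G x := by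
    intro x hx
    have := (N.smooth.contDiffAt (isOpen_compl_singleton.mem_nhds hx)).of_le
      (show (2 : WithTop ℕ∞) ≤ ((⊤ : ℕ∞) : WithTop ℕ∞) from WithTop.coe_le_coe.mpr (le_top : (2 : ℕ∞) ≤ ⊤))
    exact (this.pow 2).div_const 2
  have hline : ∀ t : ℝ, HasDerivAt (fun t : ℝ => m + t • d) d t := by
    intro t
    simpa using ((hasDerivAt_id t).smul_const d).const_add m
  have hnear : ∀ t : ℝ, |t| < 1 / 2 → ∀ᶠ u in 𝓝 t, |u| < 1 / 2 := by
    intro t ht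
    exact (isOpen_lt continuous_abs continuous_const).mem_nhds ht
  have hfirst : ∀ t : ℝ, |t| < 1 / 2 → fderiv ℝ G (m + t • d) d = 0 := by
    intro t ht
    have h1 : HasDerivAt (fun t : ℝ => G (m + t • d)) (fderiv ℝ G (m + t • d) d) t :=
      HasFDerivAt.comp_hasDerivAt (l := G) t
        ((hGs _ (hm0 t ht)).differentiableAt (by norm_num)).hasFDerivAt (hline t)
    refine h1.unique ((hasDerivAt_const t (N.F ξ ^ 2 / 2)).congr_of_eventuallyEq ?_)
    filter_upwards [hnear t ht] with u hu
    simp only [hG, hconst u hu]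
  have hm00 : m ≠ 0 := by simpa using hm0 0 (by norm_num)
  have hdd : DifferentiableAt ℝ (fun x => fderiv ℝ G x) (m + (0 : ℝ) • d) := by
    have := (hGs m hm00).fderiv_right (m := 1) (by norm_num)
    simpa using this.differentiableAt (by norm_num)
  have h2 : HasDerivAt (fun t : ℝ => fderiv ℝ G (m + t • d))
      (fderiv ℝ (fun x => fderiv ℝ G x) (m + (0 : ℝ) • d) d) 0 :=
    hdd.hasFDerivAt.comp_hasDerivAt (0 : ℝ) (hline 0)
  have h3 : HasDerivAt (fun t : ℝ => fderiv ℝ G (m + t • d) d)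
      (fderiv ℝ (fun x => fderiv ℝ G x) (m + (0 : ℝ) • d) d d) 0 := by
    simpa using h2.clm_apply (hasDerivAt_const (0 : ℝ) d)
  have h4 : fderiv ℝ (fun x => fderiv ℝ G x) (m + (0 : ℝ) • d) d d = 0 := by
    refine h3.unique ((hasDerivAt_const (0 : ℝ) (0 : ℝ)).congr_of_eventuallyEq ?_)
    filter_upwards [hnear 0 (by norm_num)] with u hu using hfirst u hu
  have h5 := N.elliptic m hm00 d hd0
  simp only [zero_smul, add_zero] at h4
  exact absurd h4 (ne_of_gt h5)

/-- The nonlinear flux `F^{p-1} F_ξ`. -/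
def A (p : ℝ) (ξ : En n) : En n := N.F ξ ^ (p - 1) • gradient N.F ξ

lemma inner_A (p : ℝ) (ξ ζ : En n) :
    ⟪N.A p ξ, ζ⟫ = N.F ξ ^ (p - 1) * fderiv ℝ N.F ξ ζ := by
  rw [A, real_inner_smul_left, inner_gradient_eq]

lemma A_zero {p : ℝ} (hp : 1 < p) : N.A p 0 = 0 := by
  rw [A, N.F_zero, Real.zero_rpow (by linarith), zero_smul]

lemma inner_A_self (p : ℝ) (ξ : En n) :
    ⟪N.A p ξ, ξ⟫ = N.F ξ ^ (p - 1) * N.F ξ := by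
  by_cases h : ξ = 0
  · simp [h, N.F_zero]
  · rw [inner_A, N.fderiv_self h]

lemma inner_A_le {p : ℝ} (hp : 1 < p) (ξ ζ : En n) :
    ⟪N.A p ξ, ζ⟫ ≤ N.F ξ ^ (p - 1) * N.F ζ := by
  by_cases h : ξ = 0
  · rw [h, N.A_zero hp, N.F_zero, Real.zero_rpow (by linarith)]; simp
  · rw [inner_A]
    exact mul_le_mul_of_nonneg_left (N.fderiv_le h ζ) (Real.rpow_nonneg (N.F_nonneg _) _)

lemma A_strictMono {p : ℝ} (hp : 1 < p) {ξ ζ : En n} (hne : ξ ≠ ζ) :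
    0 < ⟪N.A p ξ - N.A p ζ, ξ - ζ⟫ := by
  have e : ⟪N.A p ξ - N.A p ζ, ξ - ζ⟫ =
      ⟪N.A p ξ, ξ⟫ - ⟪N.A p ξ, ζ⟫ - ⟪N.A p ζ, ξ⟫ + ⟪N.A p ζ, ζ⟫ := by
    rw [inner_sub_left, inner_sub_right, inner_sub_right]; ring
  rw [e, N.inner_A_self p, N.inner_A_self p]
  have h1 := N.inner_A_le hp ξ ζ
  have h2 := N.inner_A_le hp ζ ξ
  have hp' : 0 < p - 1 := by linarith
  rcases lt_trichotomy (N.F ξ) (N.F ζ) with h | h | h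
  · have := Real.rpow_lt_rpow (N.F_nonneg ξ) h hp'
    nlinarith [mul_pos (sub_pos.mpr this) (sub_pos.mpr h)]
  · have hξ0 : ξ ≠ 0 := by
      rintro rfl
      rw [N.F_zero] at h
      exact hne (N.F_eq_zero h.symm).symm
    have hpos := N.pos ξ hξ0
    have h3 : fderiv ℝ N.F ξ ζ < N.F ζ := by
      refine lt_of_le_of_ne (N.fderiv_le hξ0 ζ) ?_
      intro heq
      exact hne (N.strict (fderiv ℝ N.F ξ) (N.fderiv_le hξ0) (N.fderiv_self hξ0) heq h hpos)
    have h4 : ⟪N.A p ξ, ζ⟫ < N.F ξ ^ (p - 1) * N.F ζ := by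
      rw [inner_A]
      exact mul_lt_mul_of_pos_left h3 (Real.rpow_pos_of_pos hpos _)
    rw [h] at h1 h2 h4 ⊢
    linarith
  · have := Real.rpow_lt_rpow (N.F_nonneg ζ) h hp'
    nlinarith [mul_pos (sub_pos.mpr this) (sub_pos.mpr h)]

lemma A_continuous (hn : 0 < n) {p : ℝ} (hp : 1 < p) : Continuous (N.A p) := by
  have hrp : Continuous (fun ξ => N.F ξ ^ (p - 1)) :=
    N.F_continuous.rpow_const (fun _ => Or.inr (by linarith))
  rw [continuous_iff_continuousAt]
  intro ξ
  by_cases h : ξ = 0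
  · subst h
    obtain ⟨c, C, hc, hC, hb⟩ := N.F_bounds hn
    have hbd : ∀ ξ, ‖N.A p ξ‖ ≤ N.F ξ ^ (p - 1) * C := by
      intro ξ
      by_cases h0 : N.A p ξ = 0
      · rw [h0, norm_zero]
        exact mul_nonneg (Real.rpow_nonneg (N.F_nonneg _) _) hC.le
      · have h1 := N.inner_A_le hp ξ (N.A p ξ)
        rw [real_inner_self_eq_norm_sq] at h1
        have h2 : 0 < ‖N.A p ξ‖ := norm_pos_iff.mpr h0
        have h3 := mul_le_mul_of_nonneg_left (hb (N.A p ξ)).2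
          (Real.rpow_nonneg (N.F_nonneg ξ) (p - 1))
        nlinarith
    rw [ContinuousAt, N.A_zero hp]
    refine squeeze_zero_norm hbd ?_
    have h9 : Continuous fun ξ => N.F ξ ^ (p - 1) * C := hrp.mul continuous_const
    have := h9.tendsto 0
    simpa [N.F_zero, Real.zero_rpow (show p - 1 ≠ 0 by linarith)] using this
  · have h1 : ContDiffAt ℝ 1 N.F ξ :=
      (N.smooth.contDiffAt (isOpen_compl_singleton.mem_nhds h)).of_le
        (by exact_mod_cast le_top)
    have h2 : ContinuousAt (fderiv ℝ N.F) ξ :=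
      (h1.fderiv_right (m := 0) (by norm_num)).continuousAt
    have h3 : ContinuousAt (gradient N.F) ξ :=
      (InnerProductSpace.toDual ℝ (En n)).symm.continuous.continuousAt.comp h2
    exact hrp.continuousAt.smul h3

end MinkowskiNorm
namespace MinkowskiNorm

variable {n : ℕ} (N : MinkowskiNorm n)

lemma exists_dual (hn : 0 < n) (x : En n) : ∃ ξ : En n, N.F ξ = 1 ∧ ⟪ξ, x⟫ = polarF N x ∧
    ∀ ζ, ⟪ζ, x⟫ ≤ N.F ζ * polarF N x := by
  obtain ⟨c, C, hc, hC, hb⟩ := N.F_bounds hn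
  have : Nonempty (Fin n) := ⟨⟨0, hn⟩⟩
  obtain ⟨e, he⟩ := exists_ne (0 : En n)
  have hnorm : ∀ ξ, ξ ≠ 0 → N.F ((N.F ξ)⁻¹ • ξ) = 1 := by
    intro ξ hξ
    rw [N.homog _ (inv_nonneg.mpr (N.F_nonneg _)), inv_mul_cancel₀ (N.pos ξ hξ).ne']
  have hS : IsCompact {ξ | N.F ξ = 1} := by
    refine Metric.isCompact_of_isClosed_isBounded
      (isClosed_eq N.F_continuous continuous_const) ?_
    refine (Metric.isBounded_closedBall (x := (0 : En n)) (r := c⁻¹)).subset ?_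
    intro ξ hξ
    have h1 : N.F ξ = 1 := hξ
    have := (hb ξ).1
    rw [mem_closedBall_zero_iff, ← one_div, le_div_iff₀ hc]
    linarith
  obtain ⟨ξ, hξ, hmax⟩ := hS.exists_isMaxOn ⟨_, hnorm e he⟩
    (f := fun ξ => ⟪ξ, x⟫) (by fun_prop)
  have hξ1 : N.F ξ = 1 := hξ
  have hξ0 : ξ ≠ 0 := by
    rintro rfl
    rw [N.F_zero] at hξ1
    norm_num at hξ1
  have hle : ∀ ζ, ζ ≠ 0 → ⟪ζ, x⟫ / N.F ζ ≤ ⟪ξ, x⟫ := by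
    intro ζ hζ
    have : ⟪(N.F ζ)⁻¹ • ζ, x⟫ ≤ ⟪ξ, x⟫ := hmax (hnorm ζ hζ)
    rwa [real_inner_smul_left, inv_mul_eq_div] at this
  have hP : polarF N x = ⟪ξ, x⟫ := by
    refine IsGreatest.csSup_eq ⟨⟨ξ, hξ0, by rw [hξ1, div_one]⟩, ?_⟩
    rintro _ ⟨ζ, hζ, rfl⟩
    exact hle ζ hζ
  refine ⟨ξ, hξ1, hP.symm, fun ζ => ?_⟩
  by_cases hζ : ζ = 0
  · simp [hζ, N.F_zero]
  · have := hle ζ hζ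
    rw [div_le_iff₀ (N.pos ζ hζ)] at this
    rw [hP]; linarith

/-- The maximizer in the definition of the polar. -/
def dual (hn : 0 < n) (x : En n) : En n := (N.exists_dual hn x).choose

lemma F_dual (hn : 0 < n) (x : En n) : N.F (N.dual hn x) = 1 := (N.exists_dual hn x).choose_spec.1

lemma inner_dual (hn : 0 < n) (x : En n) : ⟪N.dual hn x, x⟫ = polarF N x :=
  (N.exists_dual hn x).choose_spec.2.1

lemma inner_le (hn : 0 < n) (ζ x : En n) : ⟪ζ, x⟫ ≤ N.F ζ * polarF N x :=
  (N.exists_dual hn x).choose_spec.2.2 ζ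

lemma polar_zero (hn : 0 < n) : polarF N 0 = 0 := by
  rw [← N.inner_dual hn, inner_zero_right]

lemma polar_bounds (hn : 0 < n) : ∃ c C : ℝ, 0 < c ∧ 0 < C ∧ (∀ x, ‖N.dual hn x‖ ≤ C) ∧
    ∀ x, c * ‖x‖ ≤ polarF N x ∧ polarF N x ≤ C * ‖x‖ := by
  obtain ⟨c, C, hc, hC, hb⟩ := N.F_bounds hn
  have hd : ∀ x, ‖N.dual hn x‖ ≤ c⁻¹ := by
    intro x
    have h1 := (hb (N.dual hn x)).1
    rw [N.F_dual] at h1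
    rw [← one_div, le_div_iff₀ hc]
    linarith
  refine ⟨C⁻¹, c⁻¹, inv_pos.mpr hC, inv_pos.mpr hc, hd, fun x => ⟨?_, ?_⟩⟩
  · by_cases hx : x = 0
    · simp [hx, N.polar_zero hn]
    have h1 := N.inner_le hn x x
    rw [real_inner_self_eq_norm_sq] at h1
    have h2 := (hb x).2
    have h3 : 0 < ‖x‖ := norm_pos_iff.mpr hx
    have h4 : 0 < polarF N x := by
      by_contra h
      nlinarith [N.pos x hx, sq_pos_of_pos h3]
    rw [inv_mul_le_iff₀ hC]
    have : ‖x‖ * ‖x‖ ≤ ‖x‖ * (C * polarF N x) := by nlinarith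
    exact le_of_mul_le_mul_left this h3
  · rw [← N.inner_dual hn]
    exact (real_inner_le_norm _ _).trans (mul_le_mul_of_nonneg_right (hd x) (norm_nonneg _))

lemma polar_pos (hn : 0 < n) {x : En n} (hx : x ≠ 0) : 0 < polarF N x := by
  obtain ⟨c, C, hc, hC, -, hb⟩ := N.polar_bounds hn
  exact (mul_pos hc (norm_pos_iff.mpr hx)).trans_le (hb x).1

lemma polar_sub_ge (hn : 0 < n) (x y : En n) : ⟪N.dual hn x, y - x⟫ ≤ polarF N y - polarF N x := by
  have := N.inner_le hn (N.dual hn x) y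
  rw [N.F_dual, one_mul] at this
  rw [inner_sub_right, N.inner_dual]
  linarith

lemma polar_sub_le (hn : 0 < n) (x y : En n) : polarF N y - polarF N x ≤ ⟪N.dual hn y, y - x⟫ := by
  have := N.polar_sub_ge hn y x
  rw [← neg_sub y x, inner_neg_right] at this
  linarith

lemma polar_continuous (hn : 0 < n) : Continuous (polarF N) := by
  obtain ⟨c, C, hc, hC, hd, hb⟩ := N.polar_bounds hn
  refine (LipschitzWith.of_le_add_mul ⟨C, hC.le⟩ ?_).continuous
  intro x y
  have h1 := N.polar_sub_le hn y x
  have h2 := (real_inner_le_norm (N.dual hn x) (x - y)).trans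
    (mul_le_mul_of_nonneg_right (hd x) (norm_nonneg _))
  rw [dist_eq_norm]
  change _ ≤ _ + C * _
  linarith

lemma dual_unique (hn : 0 < n) {x : En n} (hx : x ≠ 0) {ζ : En n} (h1 : N.F ζ = 1)
    (h2 : ⟪ζ, x⟫ = polarF N x) : ζ = N.dual hn x := by
  have hP := N.polar_pos hn hx
  have happ : ∀ z, ((polarF N x)⁻¹ • innerSL ℝ x) z = (polarF N x)⁻¹ * ⟪z, x⟫ := by
    intro z
    simp [real_inner_comm]
  refine N.strict ((polarF N x)⁻¹ • innerSL ℝ x) ?_ ?_ ?_ ?_ ?_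
  · intro z
    rw [happ, inv_mul_le_iff₀ hP, mul_comm]
    exact N.inner_le hn z x
  · rw [happ, h1, h2, inv_mul_cancel₀ hP.ne']
  · rw [happ, N.F_dual, N.inner_dual, inv_mul_cancel₀ hP.ne']
  · rw [h1, N.F_dual]
  · rw [h1]; norm_num

lemma dual_continuousAt (hn : 0 < n) {x : En n} (hx : x ≠ 0) : ContinuousAt (N.dual hn) x := by
  obtain ⟨c, C, hc, hC, hd, hb⟩ := N.polar_bounds hn
  refine (isCompact_closedBall (0 : En n) C).tendsto_nhds_of_unique_mapClusterPt
    (Eventually.of_forall fun y => mem_closedBall_zero_iff.mpr (hd y)) ?_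
  intro ζ _ hζ
  rw [mapClusterPt_iff_ultrafilter] at hζ
  obtain ⟨U, hU, hζ⟩ := hζ
  have hid : Tendsto (fun y : En n => y) U (𝓝 x) := hU
  have h1 : Tendsto (fun y => N.F (N.dual hn y)) U (𝓝 (N.F ζ)) :=
    (N.F_continuous.tendsto ζ).comp hζ
  have h2 : Tendsto (fun y => ⟪N.dual hn y, y⟫) U (𝓝 ⟪ζ, x⟫) := hζ.inner hid
  have h3 : Tendsto (fun y => polarF N y) U (𝓝 (polarF N x)) :=
    ((N.polar_continuous hn).tendsto x).comp hid
  simp only [N.F_dual] at h1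
  simp only [N.inner_dual] at h2
  exact N.dual_unique hn hx (tendsto_nhds_unique h1 tendsto_const_nhds)
    (tendsto_nhds_unique h2 h3)

lemma polar_hasGradientAt (hn : 0 < n) {x : En n} (hx : x ≠ 0) :
    HasGradientAt (polarF N) (N.dual hn x) x := by
  rw [hasGradientAt_iff_isLittleO, Asymptotics.isLittleO_iff]
  intro ε hε
  have h := Metric.continuousAt_iff'.mp (N.dual_continuousAt hn hx) ε hε
  filter_upwards [h] with y hy
  have h1 := N.polar_sub_ge hn x y
  have h2 := N.polar_sub_le hn x y
  have h3 : ⟪N.dual hn y - N.dual hn x, y - x⟫ ≤ ε * ‖y - x‖ := by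
    refine (real_inner_le_norm _ _).trans (mul_le_mul_of_nonneg_right ?_ (norm_nonneg _))
    rw [← dist_eq_norm]; exact hy.le
  rw [inner_sub_left] at h3
  rw [Real.norm_eq_abs, abs_of_nonneg (by linarith)]
  linarith

lemma fderiv_eq_of_touch (L : En n →L[ℝ] ℝ) (hL : ∀ ζ, L ζ ≤ N.F ζ) {ξ : En n} (hξ : ξ ≠ 0)
    (h : L ξ = N.F ξ) : fderiv ℝ N.F ξ = L := by
  have h1 : HasFDerivAt (fun z => N.F z - L z) (fderiv ℝ N.F ξ - L) ξ :=
    (N.F_diff hξ).hasFDerivAt.sub L.hasFDerivAt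
  have h2 : IsLocalMin (fun z => N.F z - L z) ξ := by
    refine Eventually.of_forall fun z => ?_
    have := hL z
    simp only [h]
    linarith
  exact sub_eq_zero.mp (h2.hasFDerivAt_eq_zero h1)

lemma A_neg_dual (hn : 0 < n) (p : ℝ) {x : En n} (hx : x ≠ 0) {k : ℝ} (hk : 0 < k) :
    N.A p (-(k • N.dual hn x)) = -((k ^ (p - 1) * (polarF N x)⁻¹) • x) := by
  have hP := N.polar_pos hn hx
  set ξ := -(k • N.dual hn x) with hξ
  have hF : N.F ξ = k := by rw [hξ, N.even, N.homog _ hk.le, N.F_dual, mul_one]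
  have hξ0 : ξ ≠ 0 := by
    intro h
    rw [h, N.F_zero] at hF
    exact hk.ne hF
  have happ : ∀ z, (-((polarF N x)⁻¹ • innerSL ℝ x)) z = (polarF N x)⁻¹ * ⟪-z, x⟫ := by
    intro z
    simp [real_inner_comm]
  have hfd : fderiv ℝ N.F ξ = -((polarF N x)⁻¹ • innerSL ℝ x) := by
    refine N.fderiv_eq_of_touch _ ?_ hξ0 ?_
    · intro z
      rw [happ, inv_mul_le_iff₀ hP, mul_comm, ← N.even z]
      exact N.inner_le hn (-z) x
    · rw [happ, hF, hξ, neg_neg, real_inner_smul_left, N.inner_dual]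
      field_simp
  have hg : gradient N.F ξ = -((polarF N x)⁻¹ • x) := by
    refine ext_inner_right ℝ fun z => ?_
    rw [inner_gradient_eq, hfd]
    simp [real_inner_smul_left, inner_neg_left]
  rw [A, hF, hg, smul_neg, smul_smul]

lemma barrier_hasGradientAt (hn : 0 < n) {s α : ℝ} (hs : 0 < s) (y : En n) {x : En n}
    (hx : x ≠ y) :
    HasGradientAt (fun x => (s / polarF N (x - y)) ^ α)
      (-((α * s ^ α * polarF N (x - y) ^ (-α - 1)) • N.dual hn (x - y))) x := by
  have hxy : x - y ≠ 0 := sub_ne_zero.mpr hx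
  have hP := N.polar_pos hn hxy
  have h1 : HasFDerivAt (fun x => polarF N (x - y))
      (InnerProductSpace.toDual ℝ (En n) (N.dual hn (x - y))) x := by
    have := (N.polar_hasGradientAt hn hxy).hasFDerivAt
    have h2 : HasFDerivAt (fun x : En n => x - y) (ContinuousLinearMap.id ℝ (En n)) x :=
      (hasFDerivAt_id x).sub_const y
    exact HasFDerivAt.comp (g := polarF N) x this h2
  have h2 : HasDerivAt (fun t : ℝ => (s / t) ^ α)
      (-(α * s ^ α * polarF N (x - y) ^ (-α - 1))) (polarF N (x - y)) := by
    have h3 : HasDerivAt (fun t : ℝ => s ^ α * t ^ (-α))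
        (s ^ α * (-α * polarF N (x - y) ^ (-α - 1))) (polarF N (x - y)) :=
      (Real.hasDerivAt_rpow_const (Or.inl hP.ne')).const_mul _
    have h4 : -(α * s ^ α * polarF N (x - y) ^ (-α - 1)) =
      s ^ α * (-α * polarF N (x - y) ^ (-α - 1)) := by ring
    rw [h4]
    refine h3.congr_of_eventuallyEq ?_
    filter_upwards [Ioi_mem_nhds hP] with t ht
    have ht' : 0 < t := ht
    rw [Real.div_rpow hs.le ht'.le, Real.rpow_neg ht'.le, div_eq_mul_inv]
  rw [hasGradientAt_iff_hasFDerivAt]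
  have e : InnerProductSpace.toDual ℝ (En n)
      (-((α * s ^ α * polarF N (x - y) ^ (-α - 1)) • N.dual hn (x - y))) =
      (-(α * s ^ α * polarF N (x - y) ^ (-α - 1))) •
        InnerProductSpace.toDual ℝ (En n) (N.dual hn (x - y)) := by
    rw [map_neg, map_smulₛₗ, neg_smul]
    rfl
  rw [e]
  exact HasDerivAt.comp_hasFDerivAt (h₂ := fun t : ℝ => (s / t) ^ α) x h2 h1

end MinkowskiNorm
namespace MinkowskiNorm

variable {n : ℕ} (N : MinkowskiNorm n)

lemma weak_radial (hn : 0 < n) (y : En n) {φ : En n → ℝ} (hφ : ContDiff ℝ 1 φ)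
    (hc : HasCompactSupport φ) (hs : tsupport φ ⊆ {y}ᶜ) :
    ∫ x, ⟪((polarF N (x - y)) ^ n)⁻¹ • (x - y), gradient φ x⟫ = 0 := by
  have hU : IsOpen ({y}ᶜ : Set (En n)) := isOpen_compl_singleton
  set P : En n → ℝ := fun x => polarF N (x - y) with hP
  set D : En n → En n := fun x => N.dual hn (x - y) with hD
  have hPpos : ∀ x ∈ ({y}ᶜ : Set (En n)), 0 < P x := fun x hx =>
    N.polar_pos hn (sub_ne_zero.mpr hx)
  have hPc : Continuous P := (N.polar_continuous hn).comp (continuous_id.sub continuous_const)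
  have hDc : ContinuousOn D {y}ᶜ := by
    intro x hx
    have h1 : ContinuousAt (N.dual hn) (x - y) := N.dual_continuousAt hn (sub_ne_zero.mpr hx)
    exact (ContinuousAt.comp (f := fun x => x - y) h1 (by fun_prop)).continuousWithinAt
  have hPd : ∀ x ∈ ({y}ᶜ : Set (En n)),
      HasFDerivAt P (InnerProductSpace.toDual ℝ (En n) (D x)) x := by
    intro x hx
    have := (N.polar_hasGradientAt hn (sub_ne_zero.mpr hx)).hasFDerivAt
    have h2 : HasFDerivAt (fun x : En n => x - y) (ContinuousLinearMap.id ℝ (En n)) x :=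
      (hasFDerivAt_id x).sub_const y
    exact HasFDerivAt.comp (g := polarF N) x this h2
  set e : Fin n → En n := fun i => EuclideanSpace.single i 1 with he
  set G : Fin n → En n → ℝ := fun i x => (P x ^ n)⁻¹ * (x i - y i) with hG
  set G' : Fin n → En n → ℝ := fun i x =>
    (P x ^ n)⁻¹ + -(n * (P x ^ n)⁻¹ * (P x)⁻¹ * D x i) * (x i - y i) with hG'
  have hqc : ContinuousOn (fun x => (P x ^ n)⁻¹) {y}ᶜ :=
    (hPc.pow n).continuousOn.inv₀ (fun x hx => (pow_pos (hPpos x hx) n).ne')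
  have hqc1 : ContinuousOn (fun x => (P x)⁻¹) {y}ᶜ :=
    hPc.continuousOn.inv₀ (fun x hx => (hPpos x hx).ne')
  have hci : ∀ i, Continuous (fun x : En n => x i - y i) := fun i => by fun_prop
  have hDi : ∀ i, ContinuousOn (fun x => D x i) {y}ᶜ := fun i =>
    (by fun_prop : Continuous (fun z : En n => z i)).comp_continuousOn hDc
  have hGc : ∀ i, ContinuousOn (G i) {y}ᶜ := fun i => hqc.mul (hci i).continuousOn
  have hGc' : ∀ i, ContinuousOn (G' i) {y}ᶜ := fun i =>
    hqc.add ((((continuousOn_const.mul hqc).mul hqc1).mul (hDi i)).neg.mul (hci i).continuousOn)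
  have hGd : ∀ i, ∀ x ∈ ({y}ᶜ : Set (En n)), HasLineDerivAt ℝ (G i) (G' i x) x (e i) := by
    intro i x hx
    have hp := (hPpos x hx).ne'
    have h0 : HasDerivAt (fun t : ℝ => x + t • e i) (e i) 0 := by
      simpa using ((hasDerivAt_id (0 : ℝ)).smul_const (e i)).const_add x
    have h1 : HasDerivAt (fun t : ℝ => P (x + t • e i)) (D x i) 0 := by
      have h2 : HasFDerivAt P (InnerProductSpace.toDual ℝ (En n) (D x)) (x + (0 : ℝ) • e i) := by
        simpa using hPd x hx
      have h3 := HasFDerivAt.comp_hasDerivAt (l := P) (0 : ℝ) h2 h0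
      have h4 : InnerProductSpace.toDual ℝ (En n) (D x) (e i) = D x i := by
        rw [InnerProductSpace.toDual_apply_apply, he]
        simp [EuclideanSpace.inner_single_right]
      rw [h4] at h3
      exact h3
    have h5 : HasDerivAt (fun t : ℝ => (x + t • e i) i - y i) 1 0 := by
      have h6 : (fun t : ℝ => (x + t • e i) i - y i) = fun t : ℝ => (x i - y i) + t := by
        funext t
        simp [he]; ring
      rw [h6]
      simpa using (hasDerivAt_id (0 : ℝ)).const_add (x i - y i)
    have h7 := (h1.pow n).inv (by simpa using pow_ne_zero n hp)
    have h8 := h7.mul h5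
    unfold HasLineDerivAt
    refine HasDerivAt.congr_deriv (f := fun t : ℝ => G i (x + t • e i)) h8 ?_
    simp only [hG', zero_smul, add_zero, Pi.inv_apply, Pi.pow_apply]
    have hnn : P x ^ n = P x ^ (n - 1) * P x := by
      rw [← pow_succ, Nat.sub_add_cancel hn]
    rw [hnn]
    field_simp
    ring
  have hfc : ∀ i, Continuous (fun x => fderiv ℝ φ x (e i)) := fun i =>
    (hφ.continuous_fderiv (by norm_num)).clm_apply continuous_const
  have hz : ∀ x, x ∉ tsupport φ → φ x = 0 := fun x hx => image_eq_zero_of_notMem_tsupport hx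
  have hz' : ∀ i x, x ∉ tsupport φ → fderiv ℝ φ x (e i) = 0 := by
    intro i x hx
    have : fderiv ℝ φ x = 0 := by
      by_contra hne
      exact hx (support_fderiv_subset ℝ hne)
    rw [this]; rfl
  have hI : ∀ {f : En n → ℝ}, ContinuousOn f {y}ᶜ → (∀ x, x ∉ tsupport φ → f x = 0) →
      Integrable f := by
    intro f hf h0
    exact (continuous_of_zero_off hU (isClosed_tsupport φ) hs hf h0).integrable_of_hasCompactSupport
      (HasCompactSupport.intro hc.isCompact h0)
  have I1 : ∀ i, Integrable (fun x => G i x * fderiv ℝ φ x (e i)) := fun i =>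
    hI ((hGc i).mul (hfc i).continuousOn) (fun x hx => by rw [hz' i x hx, mul_zero])
  have I2 : ∀ i, Integrable (fun x => G' i x * φ x) := fun i =>
    hI ((hGc' i).mul hφ.continuous.continuousOn) (fun x hx => by rw [hz x hx, mul_zero])
  have I3 : ∀ i, Integrable (fun x => G i x * φ x) := fun i =>
    hI ((hGc i).mul hφ.continuous.continuousOn) (fun x hx => by rw [hz x hx, mul_zero])
  have hibp : ∀ i, ∫ x, G i x * fderiv ℝ φ x (e i) = -∫ x, G' i x * φ x := by
    intro i
    exact integral_bilinear_hasLineDerivAt_right_eq_neg_left_of_integrable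
      (B := ContinuousLinearMap.mul ℝ ℝ) (v := e i) (f := G i) (f' := G' i) (g := φ)
      (g' := fun x => fderiv ℝ φ x (e i)) (I2 i) (I1 i) (I3 i)
      (fun x hx => hGd i x (hs hx))
      (fun x _ => ((hφ.differentiable (by norm_num)) x).hasFDerivAt.hasLineDerivAt (e i))
  have hexp : ∀ x, ⟪(P x ^ n)⁻¹ • (x - y), gradient φ x⟫ = ∑ i, G i x * fderiv ℝ φ x (e i) := by
    intro x
    have hsum : (P x ^ n)⁻¹ • (x - y) = ∑ i, G i x • e i := by
      ext j
      simp [hG, he, Finset.sum_apply, Pi.single_apply]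
    rw [real_inner_comm, inner_gradient_eq, hsum, map_sum]
    simp only [map_smul, smul_eq_mul]
  have hdiv : ∀ x, ∑ i, G' i x * φ x = 0 := by
    intro x
    by_cases hx : x ∈ tsupport φ
    · have hp := (hPpos x (hs hx)).ne'
      have hin : ∑ i, D x i * (x i - y i) = P x := by
        have := N.inner_dual hn (x - y)
        rw [PiLp.inner_apply] at this
        change _ = polarF N (x - y)
        rw [← this]
        refine Finset.sum_congr rfl fun i _ => ?_
        simp [hD, mul_comm]
      rw [← Finset.sum_mul]
      have : ∑ i, G' i x = 0 := by
        simp only [hG', Finset.sum_add_distrib, Finset.sum_const, Finset.card_univ,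
          Fintype.card_fin, nsmul_eq_mul]
        have h1 : ∀ i, -(n * (P x ^ n)⁻¹ * (P x)⁻¹ * D x i) * (x i - y i) =
          -(n * (P x ^ n)⁻¹ * (P x)⁻¹) * (D x i * (x i - y i)) := fun i => by ring
        simp only [h1]
        rw [← Finset.mul_sum, hin]
        field_simp
        ring
      rw [this, zero_mul]
    · rw [← Finset.sum_mul, hz x hx, mul_zero]
  calc ∫ x, ⟪(P x ^ n)⁻¹ • (x - y), gradient φ x⟫
      = ∫ x, ∑ i, G i x * fderiv ℝ φ x (e i) := by simp only [hexp]
    _ = ∑ i, ∫ x, G i x * fderiv ℝ φ x (e i) := integral_finsetSum _ fun i _ => I1 i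
    _ = -∑ i, ∫ x, G' i x * φ x := by simp only [hibp, Finset.sum_neg_distrib]
    _ = -∫ x, ∑ i, G' i x * φ x := by rw [integral_finsetSum _ fun i _ => I2 i]
    _ = 0 := by simp only [hdiv, integral_zero, neg_zero]

/-- weak solution against `C¹` test functions. -/
def WeakC1 (p : ℝ) (U : Set (En n)) (a : En n → ℝ) : Prop :=
  ∀ φ : En n → ℝ, ContDiff ℝ 1 φ → HasCompactSupport φ → tsupport φ ⊆ U →
    ∫ x, ⟪N.A p (gradient a x), gradient φ x⟫ = 0

lemma weakC1_barrier (hn : 0 < n) {p : ℝ} (hp1 : 1 < p) (hpn : p < n) {s : ℝ} (hs : 0 < s)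
    (y : En n) {U : Set (En n)} (hU : U ⊆ {y}ᶜ) :
    N.WeakC1 p U (fun x => (s / polarF N (x - y)) ^ ((n - p) / (p - 1))) := by
  intro φ hφ hc hsup
  have hα : 0 < (n - p) / (p - 1) := div_pos (by linarith) (by linarith)
  set α := (n - p) / (p - 1) with hαd
  set κ := (α * s ^ α) ^ (p - 1) with hκ
  have hcoef : 0 < α * s ^ α := mul_pos hα (Real.rpow_pos_of_pos hs _)
  have key : ∀ x, ⟪N.A p (gradient (fun x => (s / polarF N (x - y)) ^ α) x), gradient φ x⟫ =
      -κ * ⟪((polarF N (x - y)) ^ n)⁻¹ • (x - y), gradient φ x⟫ := by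
    intro x
    by_cases hx : x ∈ tsupport φ
    · have hxy : x ≠ y := hU (hsup hx)
      have hxy' : x - y ≠ 0 := sub_ne_zero.mpr hxy
      have hP := N.polar_pos hn hxy'
      rw [(N.barrier_hasGradientAt hn hs y hxy).gradient,
        N.A_neg_dual hn p hxy' (mul_pos hcoef (Real.rpow_pos_of_pos hP _))]
      rw [inner_neg_left, real_inner_smul_left, real_inner_smul_left, neg_mul, ← mul_assoc]
      congr 2
      rw [Real.mul_rpow hcoef.le (Real.rpow_nonneg hP.le _), mul_assoc, ← Real.rpow_mul hP.le,
        ← Real.rpow_natCast, ← Real.rpow_neg hP.le, ← Real.rpow_neg_one, ← Real.rpow_add hP]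
      congr 2
      rw [hαd]
      have : p - 1 ≠ 0 := by linarith
      field_simp
      ring
    · have : gradient φ x = 0 := by
        have : fderiv ℝ φ x = 0 := by
          by_contra hne
          exact hx (support_fderiv_subset ℝ hne)
        simp [gradient, this]
      rw [this, inner_zero_right, inner_zero_right, mul_zero]
  simp only [key]
  rw [integral_const_mul, N.weak_radial hn y hφ hc (hsup.trans hU), mul_zero]

lemma gradient_continuousOn {U : Set (En n)} (hU : IsOpen U) {a : En n → ℝ}
    (ha : ContDiffOn ℝ 1 a U) : ContinuousOn (gradient a) U :=
  (InnerProductSpace.toDual ℝ (En n)).symm.continuous.comp_continuousOn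
    (ha.continuousOn_fderiv_of_isOpen hU (by norm_num))

lemma comparison (hn : 0 < n) {p : ℝ} (hp1 : 1 < p) {U : Set (En n)} (hU : IsOpen U)
    {a b : En n → ℝ} (ha : ContDiffOn ℝ 1 a U) (hb : ContDiffOn ℝ 1 b U)
    (hwa : N.WeakC1 p U a) (hwb : N.WeakC1 p U b) {ε : ℝ}
    (hK : IsCompact {x | x ∈ U ∧ ε ≤ a x - b x}) : ∀ x ∈ U, a x - b x ≤ ε := by
  classical
  set K := {x | x ∈ U ∧ ε ≤ a x - b x} with hKd
  have hKU : K ⊆ U := fun x hx => hx.1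
  set η : ℝ → ℝ := fun t => (max t 0) ^ 2 with hη
  have hηd : ∀ t, HasDerivAt η (2 * max t 0) t := by
    intro t
    rcases lt_trichotomy t 0 with h | h | h
    · rw [max_eq_right h.le, mul_zero]
      refine (hasDerivAt_const t (0 : ℝ)).congr_of_eventuallyEq ?_
      filter_upwards [Iio_mem_nhds h] with u hu
      simp [hη, max_eq_right (mem_Iio.mp hu).le]
    · subst h
      rw [max_self, mul_zero, hasDerivAt_iff_isLittleO]
      have h1 : (fun t : ℝ => t ^ 2) =o[𝓝 0] fun t : ℝ => t := by
        simpa using Asymptotics.isLittleO_pow_id (𝕜 := ℝ) (n := 2) (by norm_num)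
      refine Asymptotics.IsBigO.trans_isLittleO ?_ (by simpa using h1)
      refine Asymptotics.isBigO_of_le _ fun t => ?_
      simp only [hη, max_self, smul_zero, sub_zero]
      rcases le_total t 0 with ht | ht
      · simp [max_eq_right ht, sq_nonneg]
      · simp [max_eq_left ht]
    · rw [max_eq_left h.le]
      have h1 : HasDerivAt (fun t : ℝ => t ^ 2) (2 * t) t := by
        simpa using hasDerivAt_pow 2 t
      refine h1.congr_of_eventuallyEq ?_
      filter_upwards [Ioi_mem_nhds h] with u hu
      simp [hη, max_eq_left (mem_Ioi.mp hu).le]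
  have hηC : ContDiff ℝ 1 η := by
    rw [contDiff_one_iff_deriv]
    refine ⟨fun t => (hηd t).differentiableAt, ?_⟩
    have : deriv η = fun t => 2 * max t 0 := funext fun t => (hηd t).deriv
    rw [this]
    fun_prop
  set φ : En n → ℝ := fun x => if x ∈ U then η (a x - b x - ε) else 0 with hφd
  have hφU : ∀ x ∈ U, φ =ᶠ[𝓝 x] fun x => η (a x - b x - ε) := by
    intro x hx
    filter_upwards [hU.mem_nhds hx] with z hz
    simp [hφd, hz]
  have hφK : ∀ x, x ∉ K → φ x = 0 := by
    intro x hx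
    by_cases hxU : x ∈ U
    · have : a x - b x - ε ≤ 0 := by
        by_contra h
        exact hx ⟨hxU, by linarith⟩
      simp [hφd, hxU, hη, max_eq_right this]
    · simp [hφd, hxU]
  have hts : tsupport φ ⊆ K := closure_minimal (fun x hx => by
    by_contra h
    exact hx (hφK x h)) hK.isClosed
  have hcs : HasCompactSupport φ := HasCompactSupport.intro hK hφK
  have haA : ∀ x ∈ U, ContDiffAt ℝ 1 a x := fun x hx => ha.contDiffAt (hU.mem_nhds hx)
  have hbA : ∀ x ∈ U, ContDiffAt ℝ 1 b x := fun x hx => hb.contDiffAt (hU.mem_nhds hx)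
  have hφC : ContDiff ℝ 1 φ := by
    rw [contDiff_iff_contDiffAt]
    intro x
    by_cases hx : x ∈ K
    · have h1 : ContDiffAt ℝ 1 (fun x => a x - b x - ε) x :=
        ((haA x hx.1).sub (hbA x hx.1)).sub contDiffAt_const
      exact (ContDiffAt.comp (g := η) x hηC.contDiffAt h1).congr_of_eventuallyEq (hφU x hx.1)
    · have : φ =ᶠ[𝓝 x] fun _ => 0 := by
        filter_upwards [hK.isClosed.isOpen_compl.mem_nhds hx] with z hz using hφK z hz
      exact contDiffAt_const.congr_of_eventuallyEq this
  have hgφ : ∀ x ∈ U, gradient φ x =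
      (2 * max (a x - b x - ε) 0) • (gradient a x - gradient b x) := by
    intro x hx
    have h1 : HasFDerivAt (fun x => a x - b x - ε) (fderiv ℝ a x - fderiv ℝ b x) x :=
      (((haA x hx).differentiableAt (by norm_num)).hasFDerivAt.sub
        ((hbA x hx).differentiableAt (by norm_num)).hasFDerivAt).sub_const ε
    have h2 := HasDerivAt.comp_hasFDerivAt (h₂ := η) x (hηd _) h1
    have h3 := (h2.congr_of_eventuallyEq (hφU x hx)).fderiv
    refine ext_inner_right ℝ fun z => ?_
    rw [inner_gradient_eq, h3, real_inner_smul_left, inner_sub_left, inner_gradient_eq,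
      inner_gradient_eq]
    simp
  have hgφ0 : ∀ x, x ∉ K → gradient φ x = 0 := by
    intro x hx
    have : fderiv ℝ φ x = 0 := by
      by_contra hne
      exact hx (hts (support_fderiv_subset ℝ hne))
    simp [gradient, this]
  have hAc := N.A_continuous hn hp1
  have hAa : ContinuousOn (fun x => N.A p (gradient a x)) U :=
    hAc.comp_continuousOn (gradient_continuousOn hU ha)
  have hAb : ContinuousOn (fun x => N.A p (gradient b x)) U :=
    hAc.comp_continuousOn (gradient_continuousOn hU hb)
  have hgc : Continuous (gradient φ) :=
    (InnerProductSpace.toDual ℝ (En n)).symm.continuous.comp (hφC.continuous_fderiv (by norm_num))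
  have hcont : ∀ {V : En n → En n}, ContinuousOn V U →
      Continuous (fun x => ⟪V x, gradient φ x⟫) := by
    intro V hV
    exact continuous_of_zero_off hU hK.isClosed hKU (hV.inner hgc.continuousOn)
      (fun x hx => by rw [hgφ0 x hx, inner_zero_right])
  have hcsup : ∀ {V : En n → En n}, HasCompactSupport (fun x => ⟪V x, gradient φ x⟫) := by
    intro V
    exact HasCompactSupport.intro hK (fun x hx => by rw [hgφ0 x hx, inner_zero_right])
  set g : En n → ℝ := fun x => ⟪N.A p (gradient a x) - N.A p (gradient b x), gradient φ x⟫ with hg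
  have hgint : ∫ x, g x = 0 := by
    simp only [hg, inner_sub_left]
    rw [integral_sub ((hcont hAa).integrable_of_hasCompactSupport hcsup)
      ((hcont hAb).integrable_of_hasCompactSupport hcsup),
      hwa φ hφC hcs (hts.trans hKU), hwb φ hφC hcs (hts.trans hKU), sub_zero]
  have hgform : ∀ x ∈ U, g x = 2 * max (a x - b x - ε) 0 *
      ⟪N.A p (gradient a x) - N.A p (gradient b x), gradient a x - gradient b x⟫ := by
    intro x hx
    simp only [hg]
    rw [hgφ x hx, real_inner_smul_right]
  have hmono : ∀ ξ ζ : En n, 0 ≤ ⟪N.A p ξ - N.A p ζ, ξ - ζ⟫ := by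
    intro ξ ζ
    by_cases h : ξ = ζ
    · simp [h]
    · exact (N.A_strictMono hp1 h).le
  have hgnn : 0 ≤ g := by
    intro x
    by_cases hx : x ∈ K
    · change 0 ≤ g x
      rw [hgform x hx.1]
      exact mul_nonneg (mul_nonneg zero_le_two (le_max_right _ _)) (hmono _ _)
    · simp only [hg, Pi.zero_apply]
      rw [hgφ0 x hx, inner_zero_right]
  have hg0 : ∀ x, g x = 0 := by
    intro x
    by_contra hne
    exact ((hcont (hAa.sub hAb)).integral_pos_of_hasCompactSupport_nonneg_nonzero
      (μ := volume) hcsup hgnn hne).ne' hgint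
  have hgrad : ∀ x, gradient φ x = 0 := by
    intro x
    by_cases hx : x ∈ U
    · have h1 := hg0 x
      rw [hgform x hx] at h1
      rw [hgφ x hx]
      rcases mul_eq_zero.mp h1 with h | h
      · rw [h, zero_smul]
      · have : gradient a x = gradient b x := by
          by_contra hne
          exact (N.A_strictMono hp1 hne).ne' h
        rw [this, sub_self, smul_zero]
    · exact hgφ0 x (fun h => hx h.1)
  have hfd : ∀ x, fderiv ℝ φ x = 0 := by
    intro x
    rw [← toDual_gradient, hgrad x, map_zero]
  have : Nonempty (Fin n) := ⟨⟨0, hn⟩⟩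
  have hφ0 : ∀ x, φ x = 0 := by
    intro x
    have hne : K ≠ univ := by
      intro h
      exact noncompact_univ (En n) (h ▸ hK)
    obtain ⟨z, hz⟩ := (ne_univ_iff_exists_notMem K).mp hne
    rw [is_const_of_fderiv_eq_zero (hφC.differentiable (by norm_num)) hfd x z]
    exact hφK z hz
  intro x hx
  have h1 := hφ0 x
  simp only [hφd, hx, if_true, hη] at h1
  have h2 := pow_eq_zero_iff (two_ne_zero) |>.mp h1
  have h3 := le_max_left (a x - b x - ε) 0
  linarith

end MinkowskiNorm
namespace MinkowskiNorm

variable {n : ℕ} (N : MinkowskiNorm n)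

lemma barrier_contDiffOn (hn : 0 < n) {s α : ℝ} (hs : 0 < s) (y : En n) :
    ContDiffOn ℝ 1 (fun x => (s / polarF N (x - y)) ^ α) {y}ᶜ := by
  have hU : IsOpen ({y}ᶜ : Set (En n)) := isOpen_compl_singleton
  rw [show (1 : WithTop ℕ∞) = 0 + 1 from rfl, contDiffOn_succ_iff_fderiv_of_isOpen hU]
  refine ⟨fun x hx => (N.barrier_hasGradientAt hn hs y hx).differentiableAt.differentiableWithinAt,
    by simp, ?_⟩
  rw [contDiffOn_zero]
  have h1 : ContinuousOn (fun x => -((α * s ^ α * polarF N (x - y) ^ (-α - 1)) •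
      N.dual hn (x - y))) ({y}ᶜ : Set (En n)) := by
    intro x hx
    have hxy : x - y ≠ 0 := sub_ne_zero.mpr hx
    have hD : ContinuousAt (fun x => N.dual hn (x - y)) x :=
      ContinuousAt.comp (f := fun x => x - y) (N.dual_continuousAt hn hxy) (by fun_prop)
    have hPc : ContinuousAt (fun x => polarF N (x - y)) x :=
      ((N.polar_continuous hn).comp (continuous_id.sub continuous_const)).continuousAt
    have hPr := hPc.rpow_const (p := -α - 1) (Or.inl (N.polar_pos hn hxy).ne')
    exact ((continuousAt_const.mul hPr).smul hD).neg.continuousWithinAt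
  refine ((InnerProductSpace.toDual ℝ (En n)).continuous.comp_continuousOn h1).congr ?_
  intro x hx
  exact (N.barrier_hasGradientAt hn hs y hx).hasFDerivAt.fderiv

lemma barrier_tendsto_zero (hn : 0 < n) {s α : ℝ} (hα : 0 < α) (y : En n) :
    Tendsto (fun x => (s / polarF N (x - y)) ^ α) (cocompact (En n)) (𝓝 0) := by
  obtain ⟨c, C, hc, hC, -, hb⟩ := N.polar_bounds hn
  have h1 : Tendsto (fun x => polarF N (x - y)) (cocompact (En n)) atTop := by
    have h2 : Tendsto (fun x : En n => c * ‖x‖ - c * ‖y‖) (cocompact (En n)) atTop :=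
      tendsto_atTop_add_const_right _ _
        ((tendsto_norm_cocompact_atTop (E := En n)).const_mul_atTop hc)
    refine tendsto_atTop_mono (fun x => ?_) h2
    refine le_trans ?_ (hb (x - y)).1
    have := norm_sub_norm_le x y
    nlinarith
  have h3 := (h1.const_div_atTop s).rpow_const (p := α) (Or.inr hα.le)
  simpa [Real.zero_rpow hα.ne'] using h3

lemma barrier_tendsto_top (hn : 0 < n) {s α : ℝ} (hs : 0 < s) (hα : 0 < α) (y : En n) :
    Tendsto (fun x => (s / polarF N (x - y)) ^ α) (𝓝[≠] y) atTop := by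
  have h1 : Tendsto (fun x => polarF N (x - y)) (𝓝[≠] y) (𝓝[>] 0) := by
    refine tendsto_nhdsWithin_iff.mpr ⟨?_, ?_⟩
    · have hc : Continuous (fun x => polarF N (x - y)) :=
        (N.polar_continuous hn).comp (continuous_id.sub continuous_const)
      have := hc.tendsto y
      simp only [sub_self, N.polar_zero hn] at this
      exact this.mono_left nhdsWithin_le_nhds
    · filter_upwards [self_mem_nhdsWithin] with x hx
      exact N.polar_pos hn (sub_ne_zero.mpr hx)
  have h2 : Tendsto (fun x => s / polarF N (x - y)) (𝓝[≠] y) atTop := by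
    have := (tendsto_inv_nhdsGT_zero.comp h1).const_mul_atTop hs
    refine this.congr fun x => ?_
    simp [div_eq_mul_inv]
  exact (tendsto_rpow_atTop hα).comp h2

lemma weakC1_of_isWeak (hn : 0 < n) {p : ℝ} (hp1 : 1 < p) {Ω U : Set (En n)} (hU : IsOpen U)
    (hUΩ : U ⊆ Ω) {v : En n → ℝ} (hv : ContDiffOn ℝ 1 v U) (hsol : IsWeakPHarmonic N Ω p v) :
    N.WeakC1 p U v := by
  intro φ hφ hc hs
  refine weak_C1 hU (V := fun x => N.A p (gradient v x))
    ((N.A_continuous hn hp1).comp_continuousOn (gradient_continuousOn hU hv)) ?_ hφ hc hs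
  intro ψ hψ
  have h := hsol ψ ⟨hψ.1, hψ.2.1, hψ.2.2.trans hUΩ⟩
  rw [setIntegral_eq_integral_of_forall_compl_eq_zero] at h
  · rw [← h]
    refine integral_congr_ae (Eventually.of_forall fun x => ?_)
    simp only [A, real_inner_smul_left]
  · intro x hx
    have : fderiv ℝ ψ x = 0 := by
      by_contra hne
      exact hx (hUΩ (hψ.2.2 (support_fderiv_subset ℝ hne)))
    simp [gradient, this]

end MinkowskiNorm

/-- Barrier estimates for the anisotropic `p`-capacitary potential `v_p`:
if `W_r(x₀) ⊆ Ωᶜ ⊆ W_s(y₀)` then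
`(r/F^o(x-x₀))^{(n-p)/(p-1)} ≤ v_p(x) ≤ (s/F^o(x-y₀))^{(n-p)/(p-1)}` on `Ω ∖ {y₀}`. -/
theorem statement6 (n : ℕ) (N : MinkowskiNorm n)
    (Ω : Set (En n)) (hΩ : IsOpen Ω) (hsb : HasSmoothBoundary Ω)
    (hbd : Bornology.IsBounded Ωᶜ)
    (p : ℝ) (hp1 : 1 < p) (hpn : p < n)
    (v : En n → ℝ) (hpos : ∀ x ∈ closure Ω, 0 < v x)
    (hC1 : ContDiffOn ℝ 1 v (closure Ω))
    (hsol : IsWeakPHarmonic N Ω p v)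
    (hbc : ∀ x ∈ frontier Ω, v x = 1)
    (hlim : Tendsto v (cocompact (En n)) (𝓝 0))
    (r s : ℝ) (hr : 0 < r) (hs : 0 < s) (x₀ y₀ : En n)
    (hin : Wulff N r x₀ ⊆ Ωᶜ) (hout : Ωᶜ ⊆ Wulff N s y₀) :
    ∀ x ∈ Ω, x ≠ y₀ →
      (r / polarF N (x - x₀)) ^ ((n - p) / (p - 1)) ≤ v x ∧
      v x ≤ (s / polarF N (x - y₀)) ^ ((n - p) / (p - 1)) := by
  have hn : 0 < n := by
    have : (0 : ℝ) < n := by linarith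
    exact_mod_cast this
  have hα : 0 < (n - p) / (p - 1) := div_pos (by linarith) (by linarith)
  have hvc : ContinuousOn v (closure Ω) := hC1.continuousOn
  have hPc : ∀ y : En n, Continuous (fun x => polarF N (x - y)) := fun y =>
    (N.polar_continuous hn).comp (continuous_id.sub continuous_const)
  have hCΩ : closure Ω ⊆ {x | r ≤ polarF N (x - x₀)} := by
    refine closure_minimal ?_ (isClosed_le continuous_const (hPc x₀))
    intro z hz
    by_contra h
    have h' : polarF N (z - x₀) < r := by
      by_contra h2
      exact h (not_lt.mp h2)
    exact hin (show z ∈ Wulff N r x₀ from h') hz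
  have hx₀ : closure Ω ⊆ {x₀}ᶜ := by
    intro z hz h
    have h1 : r ≤ polarF N (z - x₀) := hCΩ hz
    rw [mem_singleton_iff.mp h, sub_self, N.polar_zero hn] at h1
    linarith
  have hfr : ∀ z ∈ closure Ω, z ∉ Ω → z ∈ frontier Ω := by
    intro z hz hzn
    rw [hΩ.frontier_eq]
    exact ⟨hz, hzn⟩
  intro x hx hxy
  constructor
  · set w : En n → ℝ := fun x => (r / polarF N (x - x₀)) ^ ((n - p) / (p - 1)) with hw
    have hwC : ContDiffOn ℝ 1 w {x₀}ᶜ := N.barrier_contDiffOn hn hr x₀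
    have hΩx : Ω ⊆ {x₀}ᶜ := subset_closure.trans hx₀
    refine sub_nonpos.mp (le_of_forall_pos_le_add fun ε hε => ?_)
    rw [zero_add]
    refine N.comparison hn hp1 hΩ (a := w) (b := v) (hwC.mono hΩx) (hC1.mono subset_closure)
      (N.weakC1_barrier hn hp1 hpn hr x₀ hΩx)
      (N.weakC1_of_isWeak hn hp1 hΩ subset_rfl (hC1.mono subset_closure) hsol)
      (ε := ε) ?_ x hx
    obtain ⟨T, hT, hTs⟩ := mem_cocompact.mp
      ((N.barrier_tendsto_zero hn (s := r) hα x₀).eventually (gt_mem_nhds hε))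
    refine hT.of_isClosed_subset ?_ ?_
    · have e : {x | x ∈ Ω ∧ ε ≤ w x - v x} = closure Ω ∩ (fun x => w x - v x) ⁻¹' Ici ε := by
        ext z
        constructor
        · rintro ⟨h1, h2⟩
          exact ⟨subset_closure h1, h2⟩
        · rintro ⟨h1, h2⟩
          refine ⟨?_, h2⟩
          by_contra hz
          have h3 := hbc z (hfr z h1 hz)
          have h4 : r ≤ polarF N (z - x₀) := hCΩ h1
          have h5 : w z ≤ 1 :=
            Real.rpow_le_one (div_nonneg hr.le (hr.le.trans h4))
              ((div_le_one (hr.trans_le h4)).mpr h4) hα.le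
          have h6 : ε ≤ w z - v z := h2
          linarith
      rw [e]
      exact ((hwC.continuousOn.mono hx₀).sub hvc).preimage_isClosed_of_isClosed
        isClosed_closure isClosed_Ici
    · rintro z ⟨h1, h2⟩
      by_contra hz
      have h3 : w z < ε := hTs hz
      have h4 := hpos z (subset_closure h1)
      linarith
  · set w : En n → ℝ := fun x => (s / polarF N (x - y₀)) ^ ((n - p) / (p - 1)) with hw
    have hwC : ContDiffOn ℝ 1 w {y₀}ᶜ := N.barrier_contDiffOn hn hs y₀
    have hU : IsOpen (Ω ∩ {y₀}ᶜ) := hΩ.inter isOpen_compl_singleton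
    have hvU : ContDiffOn ℝ 1 v (Ω ∩ {y₀}ᶜ) := hC1.mono (inter_subset_left.trans subset_closure)
    refine sub_nonpos.mp (le_of_forall_pos_le_add fun ε hε => ?_)
    rw [zero_add]
    refine N.comparison hn hp1 hU (a := v) (b := w) hvU (hwC.mono inter_subset_right)
      (N.weakC1_of_isWeak hn hp1 hU inter_subset_left hvU hsol)
      (N.weakC1_barrier hn hp1 hpn hs y₀ inter_subset_right)
      (ε := ε) ?_ x ⟨hx, hxy⟩
    have hwpos : ∀ z, z ≠ y₀ → 0 < w z := fun z hz =>
      Real.rpow_pos_of_pos (div_pos hs (N.polar_pos hn (sub_ne_zero.mpr hz))) _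
    obtain ⟨T, hT, hTs⟩ := mem_cocompact.mp (hlim.eventually (gt_mem_nhds hε))
    refine hT.of_isClosed_subset ?_ ?_
    · refine isClosed_of_closure_subset fun z hz => ?_
      set K := {x | x ∈ Ω ∩ {y₀}ᶜ ∧ ε ≤ v x - w x} with hK
      have hKΩ : K ⊆ closure Ω := fun u hu => subset_closure hu.1.1
      have hzΩ : z ∈ closure Ω := closure_minimal hKΩ isClosed_closure hz
      have hne : (𝓝[K] z).NeBot := mem_closure_iff_nhdsWithin_neBot.mp hz
      have hvz : Tendsto v (𝓝[K] z) (𝓝 (v z)) := (hvc z hzΩ).mono hKΩ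
      have hzy : z ≠ y₀ := by
        rintro rfl
        have h1 : ∀ᶠ u in 𝓝[K] z, v u < v z + 1 := hvz.eventually (gt_mem_nhds (by linarith))
        have h2 : ∀ᶠ u in 𝓝[K] z, v z + 1 ≤ w u :=
          ((N.barrier_tendsto_top hn hs hα z).mono_left
            (nhdsWithin_mono z fun u hu => hu.1.2)).eventually_ge_atTop _
        obtain ⟨u, ⟨h3, h4⟩, h5⟩ := ((h1.and h2).and self_mem_nhdsWithin).exists
        have h6 : ε ≤ v u - w u := h5.2
        linarith
      have hwz : Tendsto w (𝓝[K] z) (𝓝 (w z)) :=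
        (hwC.continuousOn z hzy).mono fun u hu => hu.1.2
      have hle : ε ≤ v z - w z :=
        ge_of_tendsto (hvz.sub hwz) (by filter_upwards [self_mem_nhdsWithin] with u hu using hu.2)
      refine ⟨⟨?_, hzy⟩, hle⟩
      by_contra hzn
      have h3 := hbc z (hfr z hzΩ hzn)
      have h4 : polarF N (z - y₀) < s := hout hzn
      have h5 : 1 ≤ w z := Real.one_le_rpow
        ((one_le_div (N.polar_pos hn (sub_ne_zero.mpr hzy))).mpr h4.le) hα.le
      linarith
    · rintro z ⟨h1, h2⟩
      by_contra hz
      have h3 : v z < ε := hTs hz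
      have h4 := hwpos z h1.2
      linarith
end
end

section
/- Let F be a Minkowski norm on ℝⁿ and Ω ⊆ ℝⁿ open. Let p_k be a sequence with p_k > 1 and p_k → 1, and let u_k be locally Lipschitz functions on Ω, each of which minimizes the functional J^{p_k} in the sense that for every precompact K ⊂ Ω and every locally Lipschitz φ with φ = u_k on Ω∖K, ∫_K ((1/p_k)·F(∇u_k)^{p_k} + u_k·F(∇u_k)^{p_k}) dx ≤ ∫_K ((1/p_k)·F(∇φ)^{p_k} + φ·F(∇u_k)^{p_k}) dx. Assume F(∇u_k) ≤ C almost everywhere for a constant C independent of k, and that u_k converges locally uniformly to a locally Lipschitz function u. Then for every nonnegative cutoff function η ∈ C_c^∞(Ω): limsup_{k→∞} ∫_Ω η·F(∇u_k)^{p_k} dx ≤ ∫_Ω η·F(∇u) dx. -/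
open MeasureTheory Filter Topology Metric Set
open scoped RealInnerProductSpace NNReal

noncomputable section

lemma aux_rpow_tangent {s t p : ℝ} (hs : 0 ≤ s) (ht : 0 ≤ t) (hp : 1 ≤ p) :
    s ^ p ≤ t ^ p + p * s ^ (p - 1) * (s - t) := by
  rcases hs.eq_or_lt with rfl | hs
  · by_cases h1 : p = 1
    · subst h1; simp
    · have hp1 : p - 1 ≠ 0 := sub_ne_zero.2 h1
      rw [Real.zero_rpow (by linarith), Real.zero_rpow hp1]
      have := Real.rpow_nonneg ht p
      simpa using this
  · have h := one_add_mul_self_le_rpow_one_add (s := t / s - 1)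
      (by have : 0 ≤ t / s := by positivity
          linarith) hp
    rw [add_sub_cancel, Real.div_rpow ht hs.le] at h
    have h2 := mul_le_mul_of_nonneg_right h (Real.rpow_nonneg hs.le p)
    rw [div_mul_cancel₀ _ (Real.rpow_pos_of_pos hs p).ne'] at h2
    have h3 : s ^ p = s ^ (p - 1) * s := by
      rw [← Real.rpow_add_one hs.ne']; simp
    have h4 : (1 + p * (t / s - 1)) * s ^ p = s ^ p + p * s ^ (p - 1) * (t - s) := by
      have : (t / s - 1) * s = t - s := by field_simp
      calc (1 + p * (t / s - 1)) * s ^ p = s ^ p + p * ((t / s - 1) * s ^ p) := by ring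
        _ = s ^ p + p * (s ^ (p - 1) * ((t / s - 1) * s)) := by
          congr 2; rw [h3]; ring
        _ = _ := by rw [this]; ring
    rw [h4] at h2
    linarith

lemma aux_pow_est {a A B L θ δ G p : ℝ} (ha : 0 ≤ a) (hA : 0 ≤ A) (hB : 0 ≤ B)
    (hAL : A ≤ L) (hBL : B ≤ L) (hL : 1 ≤ L) (hθ : 0 ≤ θ) (hθ1 : θ ≤ 1)
    (hδ : 0 ≤ δ) (hδ1 : δ ≤ 1) (hG : 0 ≤ G) (hp : 1 < p) (hp2 : p ≤ 2)
    (h : a ≤ θ * A + (1 - θ) * B + δ * G) :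
    a ^ p ≤ θ * A ^ p + (1 - θ) * B ^ p + 2 * (L + G) * G * δ := by
  have hθ' : 0 ≤ 1 - θ := by linarith
  have ht : 0 ≤ θ * A + (1 - θ) * B := by positivity
  have hs : 0 ≤ θ * A + (1 - θ) * B + δ * G := by positivity
  have htL : θ * A + (1 - θ) * B ≤ L := by nlinarith
  have hsL : θ * A + (1 - θ) * B + δ * G ≤ L + G := by nlinarith
  have h1 := Real.rpow_le_rpow ha h (by linarith : 0 ≤ p)
  have h2 := aux_rpow_tangent hs ht hp.le
  have h3 := (convexOn_rpow hp.le).2 (mem_Ici.2 hA) (mem_Ici.2 hB) hθ hθ' (by ring)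
  simp only [smul_eq_mul] at h3
  have h4 : (θ * A + (1 - θ) * B + δ * G) ^ (p - 1) ≤ L + G := by
    calc _ ≤ (L + G) ^ (p - 1) := Real.rpow_le_rpow hs hsL (by linarith)
      _ ≤ (L + G) ^ (1 : ℝ) := Real.rpow_le_rpow_of_exponent_le (by linarith) (by linarith)
      _ = _ := Real.rpow_one _
  have h5 : p * (θ * A + (1 - θ) * B + δ * G) ^ (p - 1) *
      (θ * A + (1 - θ) * B + δ * G - (θ * A + (1 - θ) * B)) ≤ 2 * (L + G) * (δ * G) := by
    rw [add_sub_cancel_left]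
    have := Real.rpow_nonneg hs (p - 1)
    gcongr
  linarith

lemma aux_F_zero {n : ℕ} (N : MinkowskiNorm n) : N.F 0 = 0 := by
  simpa using N.homog 0 le_rfl 0

lemma aux_F_nonneg {n : ℕ} (N : MinkowskiNorm n) (x : En n) : 0 ≤ N.F x := by
  by_cases h : x = 0
  · rw [h, aux_F_zero]
  · exact (N.pos x h).le

lemma aux_F_add {n : ℕ} (N : MinkowskiNorm n) (x y : En n) : N.F (x + y) ≤ N.F x + N.F y := by
  have h := N.convexOn.2 (mem_univ x) (mem_univ y) (by norm_num : (0:ℝ) ≤ 1/2)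
    (by norm_num : (0:ℝ) ≤ 1/2) (by norm_num)
  rw [← smul_add, N.homog _ (by norm_num)] at h
  simp only [smul_eq_mul] at h
  linarith

lemma aux_F_smul {n : ℕ} (N : MinkowskiNorm n) (c : ℝ) (x : En n) : N.F (c • x) = |c| * N.F x := by
  rcases le_total 0 c with h | h
  · rw [N.homog c h, abs_of_nonneg h]
  · rw [← N.even, ← neg_smul, N.homog _ (by linarith), abs_of_nonpos h]

lemma aux_F_cont {n : ℕ} (N : MinkowskiNorm n) : Continuous N.F :=
  N.convexOn.locallyLipschitz.continuous

lemma aux_grad_meas {n : ℕ} (f : En n → ℝ) : Measurable (gradient f) := by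
  have : gradient f = fun x => (InnerProductSpace.toDual ℝ (En n)).symm (fderiv ℝ f x) := rfl
  rw [this]
  exact (InnerProductSpace.toDual ℝ (En n)).symm.continuous.measurable.comp (measurable_fderiv ℝ f)

lemma aux_grad_bdd {n : ℕ} (N : MinkowskiNorm n) {Ω K : Set (En n)} (hΩ : IsOpen Ω)
    (hK : IsCompact K) (hKΩ : K ⊆ Ω) {f : En n → ℝ} (hf : LocLipOn f Ω) :
    ∃ L, ∀ x ∈ K, N.F (gradient f x) ≤ L := by
  have h1 : ∃ L, ∀ x ∈ K, ‖gradient f x‖ ≤ L := by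
    refine hK.induction_on (p := fun s => ∃ L, ∀ x ∈ s, ‖gradient f x‖ ≤ L) ⟨0, by simp⟩ ?_ ?_ ?_
    · rintro s t hst ⟨L, hL⟩
      exact ⟨L, fun x hx => hL x (hst hx)⟩
    · rintro s t ⟨L, hL⟩ ⟨L', hL'⟩
      refine ⟨max L L', ?_⟩
      rintro x (hx | hx)
      · exact (hL x hx).trans (le_max_left _ _)
      · exact (hL' x hx).trans (le_max_right _ _)
    · intro x hx
      obtain ⟨C, t, ht, hl⟩ := hf x (hKΩ hx)
      rw [hΩ.nhdsWithin_eq (hKΩ hx)] at ht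
      refine ⟨interior t, mem_nhdsWithin_of_mem_nhds (interior_mem_nhds.2 ht), C, ?_⟩
      intro y hy
      have : ‖gradient f y‖ = ‖fderiv ℝ f y‖ :=
        (InnerProductSpace.toDual ℝ (En n)).symm.norm_map _
      rw [this]
      exact norm_fderiv_le_of_lipschitzOn ℝ (mem_interior_iff_mem_nhds.1 hy) hl
  obtain ⟨L, hL⟩ := h1
  obtain ⟨M, hM⟩ := (isCompact_closedBall (0 : En n) L).bddAbove_image (aux_F_cont N).continuousOn
  exact ⟨M, fun x hx => hM ⟨_, by simpa using hL x hx, rfl⟩⟩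

lemma aux_ae_diff {n : ℕ} {Ω : Set (En n)} (hΩ : IsOpen Ω) {f : En n → ℝ} (hf : LocLipOn f Ω) :
    ∀ᵐ x, x ∈ Ω → DifferentiableAt ℝ f x := by
  rw [ae_iff]
  refine measure_null_of_locally_null _ fun x hx => ?_
  simp only [Classical.not_imp, mem_ofPred_eq] at hx
  obtain ⟨C, t, ht, hl⟩ := hf x hx.1
  rw [hΩ.nhdsWithin_eq hx.1] at ht
  refine ⟨{y | ¬ (y ∈ Ω → DifferentiableAt ℝ f y)} ∩ interior t, inter_mem_nhdsWithin _ (interior_mem_nhds.2 ht), ?_⟩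
  have := (hl.mono interior_subset).ae_differentiableWithinAt_of_mem (μ := volume)
  rw [ae_iff] at this
  refine measure_mono_null ?_ this
  rintro y ⟨hy1, hy2⟩ h
  refine hy1 fun _ => (h hy2).differentiableAt (isOpen_interior.mem_nhds hy2)

lemma aux_loclip_mul {n : ℕ} {Ω : Set (En n)} {f g : En n → ℝ} (hf : LocLipOn f Ω)
    (hg : LocLipOn g Ω) : LocLipOn (fun x => f x * g x) Ω := by
  intro x hx
  have hm : LocallyLipschitz (fun q : ℝ × ℝ => q.1 * q.2) :=
    ContDiff.locallyLipschitz (𝕂 := ℝ) (by fun_prop)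
  obtain ⟨C, s, hs, hC⟩ := hm (f x, g x)
  obtain ⟨Cf, t, ht, hCf⟩ := hf x hx
  obtain ⟨Cg, r, hr, hCg⟩ := hg x hx
  have hcf : ContinuousWithinAt f Ω x := LocallyLipschitzOn.continuousOn (f := f) hf x hx
  have hcg : ContinuousWithinAt g Ω x := LocallyLipschitzOn.continuousOn (f := g) hg x hx
  have hpre := (hcf.prodMk hcg) hs
  refine ⟨C * max Cf Cg, (t ∩ r) ∩ (fun y => (f y, g y)) ⁻¹' s, inter_mem (inter_mem ht hr) hpre, ?_⟩
  exact hC.comp (((hCf.mono inter_subset_left).prodMk (hCg.mono inter_subset_right)).mono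
    inter_subset_left) (fun y hy => hy.2)

lemma aux_loclip_comb {n : ℕ} {Ω : Set (En n)} {v w θ : En n → ℝ} (hv : LocLipOn v Ω)
    (hw : LocLipOn w Ω) (hθ : LocLipOn θ Ω) :
    LocLipOn (fun x => v x + θ x * (w x - v x)) Ω := by
  have h1 : LocLipOn (fun x => w x - v x) Ω := LocallyLipschitzOn.sub (f := w) (g := v) hw hv
  have h2 := aux_loclip_mul hθ h1
  exact LocallyLipschitzOn.add (f := v) (g := fun x => θ x * (w x - v x)) hv h2

lemma aux_grad_comb {n : ℕ} {v w θ : En n → ℝ} {x : En n} (hv : DifferentiableAt ℝ v x)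
    (hw : DifferentiableAt ℝ w x) (hθ : DifferentiableAt ℝ θ x) :
    gradient (fun x => v x + θ x * (w x - v x)) x =
      θ x • gradient w x + (1 - θ x) • gradient v x + (w x - v x) • gradient θ x := by
  have h := hv.hasFDerivAt.add (hθ.hasFDerivAt.mul (hw.hasFDerivAt.sub hv.hasFDerivAt))
  have h' := h.fderiv
  have e : gradient (fun x => v x + θ x * (w x - v x)) x =
    (InnerProductSpace.toDual ℝ (En n)).symm (fderiv ℝ (fun x => v x + θ x * (w x - v x)) x) := rfl
  rw [e]
  change fderiv ℝ (fun x => v x + θ x * (w x - v x)) x = _ at h'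
  rw [h']
  simp only [gradient, map_add, map_sub, map_smul, sub_smul, smul_sub, one_smul, Pi.sub_apply]
  module

lemma aux_intble {n : ℕ} (N : MinkowskiNorm n) {K : Set (En n)} (hK : IsCompact K)
    (f : En n → ℝ) {p L : ℝ} (hp : 0 ≤ p)
    (hb : ∀ᵐ x ∂(volume.restrict K), N.F (gradient f x) ≤ L) :
    IntegrableOn (fun x => N.F (gradient f x) ^ p) K := by
  refine Measure.integrableOn_of_bounded (M := L ^ p) hK.measure_lt_top.ne ?_ ?_
  · exact (((aux_F_cont N).measurable.comp (aux_grad_meas f)).pow_const p).aestronglyMeasurable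
  · filter_upwards [hb] with x hx
    rw [Real.norm_of_nonneg (Real.rpow_nonneg (aux_F_nonneg N _) _)]
    exact Real.rpow_le_rpow (aux_F_nonneg N _) hx hp

lemma aux_core {n : ℕ} (N : MinkowskiNorm n) {Ω : Set (En n)} (hΩ : IsOpen Ω) {p : ℝ}
    (hp : 1 < p) (hp2 : p ≤ 2) {v w θ : En n → ℝ} (hv : LocLipOn v Ω) (hw : LocLipOn w Ω)
    (hθ : IsTestFun Ω θ) (hθ0 : ∀ x, 0 ≤ θ x) (hθ1 : ∀ x, θ x ≤ 1)
    (hmin : ∀ K : Set (En n), IsCompact (closure K) → closure K ⊆ Ω →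
      ∀ φ : En n → ℝ, LocLipOn φ Ω → (∀ x ∈ Ω \ K, φ x = v x) →
        (∫ x in K, ((1 / p) * N.F (gradient v x) ^ p + v x * N.F (gradient v x) ^ p)) ≤
          ∫ x in K, ((1 / p) * N.F (gradient φ x) ^ p + φ x * N.F (gradient v x) ^ p))
    {L G δ : ℝ} (hL : 1 ≤ L) (hG : 0 ≤ G) (hδ : 0 ≤ δ) (hδ1 : δ ≤ 1)
    (hvL : ∀ᵐ x, x ∈ Ω → N.F (gradient v x) ≤ L)
    (hwL : ∀ x ∈ tsupport θ, N.F (gradient w x) ≤ L)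
    (hθG : ∀ x ∈ tsupport θ, N.F (gradient θ x) ≤ G)
    (hd : ∀ x ∈ tsupport θ, |w x - v x| ≤ δ) :
    ∫ x in tsupport θ, θ x * N.F (gradient v x) ^ p ≤
      (∫ x in tsupport θ, θ x * N.F (gradient w x) ^ p) +
        2 * (δ * (2 * (L + G) * G + L ^ 2)) * volume.real (tsupport θ) := by
  obtain ⟨hsm, hcs, hsub⟩ := hθ
  set K := tsupport θ with hKdef
  have hK : IsCompact K := hcs
  have hKm : MeasurableSet K := hK.isClosed.measurableSet
  have hp0 : 0 < p := by linarith
  have hθl : LocLipOn θ Ω := by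
    have h1 : LocallyLipschitz θ := ContDiff.locallyLipschitz (𝕂 := ℝ) (hsm.of_le (by simp))
    exact (locallyLipschitzOn_univ.2 h1).mono (subset_univ _)
  set φ : En n → ℝ := fun x => v x + θ x * (w x - v x) with hφ
  have hφl : LocLipOn φ Ω := aux_loclip_comb hv hw hθl
  have hm := hmin K (by rwa [hK.isClosed.closure_eq]) (by rwa [hK.isClosed.closure_eq]) φ hφl
    (fun x hx => by
      have : θ x = 0 := image_eq_zero_of_notMem_tsupport hx.2
      simp [hφ, this])
  have hcv : ContinuousOn v K := (LocallyLipschitzOn.continuousOn (f := v) hv).mono hsub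
  have hcφ : ContinuousOn φ K := (LocallyLipschitzOn.continuousOn (f := φ) hφl).mono hsub
  have hcθ : ContinuousOn θ K := hsm.continuous.continuousOn
  have hvK : ∀ᵐ x ∂(volume.restrict K), N.F (gradient v x) ≤ L := by
    rw [ae_restrict_iff' hKm]
    filter_upwards [hvL] with x hx h using hx (hsub h)
  have hwK : ∀ᵐ x ∂(volume.restrict K), N.F (gradient w x) ≤ L :=
    (ae_restrict_iff' hKm).2 (Eventually.of_forall hwL)
  have hgrad : ∀ᵐ x ∂(volume.restrict K), N.F (gradient φ x) ≤
      θ x * N.F (gradient w x) + (1 - θ x) * N.F (gradient v x) + δ * G := by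
    rw [ae_restrict_iff' hKm]
    filter_upwards [aux_ae_diff hΩ hv, aux_ae_diff hΩ hw] with x h1 h2 hx
    rw [hφ, aux_grad_comb (h1 (hsub hx)) (h2 (hsub hx))
      ((hsm.differentiable (by simp)).differentiableAt)]
    refine (aux_F_add N _ _).trans (add_le_add ((aux_F_add N _ _).trans (le_of_eq ?_)) ?_)
    · rw [N.homog _ (hθ0 x), N.homog _ (by linarith [hθ1 x])]
    · rw [aux_F_smul]
      exact mul_le_mul (hd x hx) (hθG x hx) (aux_F_nonneg N _) hδ
  have hφK : ∀ᵐ x ∂(volume.restrict K), N.F (gradient φ x) ≤ L + G := by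
    filter_upwards [hgrad, hvK, hwK] with x h1 h2 h3
    nlinarith [hθ0 x, hθ1 x, mul_le_mul_of_nonneg_left h3 (hθ0 x),
      mul_le_mul_of_nonneg_left h2 (sub_nonneg.2 (hθ1 x)), mul_le_mul_of_nonneg_right hδ1 hG]
  have iv := aux_intble N hK v hp0.le hvK
  have iw := aux_intble N hK w hp0.le hwK
  have iφ := aux_intble N hK φ hp0.le hφK
  have i1 : IntegrableOn (fun x => v x * N.F (gradient v x) ^ p) K := iv.continuousOn_mul hcv hK
  have i2 : IntegrableOn (fun x => φ x * N.F (gradient v x) ^ p) K := iv.continuousOn_mul hcφ hK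
  have i3 : IntegrableOn (fun x => θ x * N.F (gradient v x) ^ p) K := iv.continuousOn_mul hcθ hK
  have i4 : IntegrableOn (fun x => θ x * N.F (gradient w x) ^ p) K := iw.continuousOn_mul hcθ hK
  have iconst : IntegrableOn (fun _ : En n => δ * (2 * (L + G) * G + L ^ 2)) K :=
    integrableOn_const hK.measure_lt_top.ne
  have j1 : IntegrableOn (fun x => (1 / p) * N.F (gradient v x) ^ p +
      v x * N.F (gradient v x) ^ p) K := (iv.const_mul _).add i1
  have j2 : IntegrableOn (fun x => (1 / p) * N.F (gradient φ x) ^ p +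
      φ x * N.F (gradient v x) ^ p) K := (iφ.const_mul _).add i2
  have j3 : IntegrableOn (fun x => (1 / p) * (θ x * N.F (gradient w x) ^ p -
      θ x * N.F (gradient v x) ^ p)) K := (i4.sub i3).const_mul _
  have j4 : IntegrableOn (fun x => (1 / p) * (θ x * N.F (gradient w x) ^ p -
      θ x * N.F (gradient v x) ^ p) + δ * (2 * (L + G) * G + L ^ 2)) K := j3.add iconst
  have key : ∫ x in K, ((1 / p) * N.F (gradient φ x) ^ p + φ x * N.F (gradient v x) ^ p) ≤
      ∫ x in K, (((1 / p) * N.F (gradient v x) ^ p + v x * N.F (gradient v x) ^ p) +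
        ((1 / p) * (θ x * N.F (gradient w x) ^ p - θ x * N.F (gradient v x) ^ p) +
          δ * (2 * (L + G) * G + L ^ 2))) := by
    refine integral_mono_ae j2 (j1.add (j3.add iconst)) ?_
    filter_upwards [hgrad, hvK, hwK, ae_restrict_mem hKm] with x h1 h2 h3 hx
    have e := aux_pow_est (aux_F_nonneg N (gradient φ x)) (aux_F_nonneg N (gradient w x))
      (aux_F_nonneg N (gradient v x)) h3 h2 hL (hθ0 x) (hθ1 x) hδ hδ1 hG hp hp2 h1
    have hB : 0 ≤ N.F (gradient v x) ^ p := Real.rpow_nonneg (aux_F_nonneg N _) _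
    have hBL : N.F (gradient v x) ^ p ≤ L ^ 2 := by
      calc _ ≤ L ^ p := Real.rpow_le_rpow (aux_F_nonneg N _) h2 hp0.le
        _ ≤ L ^ (2 : ℝ) := Real.rpow_le_rpow_of_exponent_le hL hp2
        _ = L ^ 2 := by norm_num
    have e2 : θ x * (w x - v x) * N.F (gradient v x) ^ p ≤ δ * L ^ 2 := by
      have : θ x * (w x - v x) ≤ δ := by
        have h5 := hd x hx
        have h6 := le_abs_self (w x - v x)
        nlinarith [hθ0 x, hθ1 x, abs_nonneg (w x - v x)]
      exact mul_le_mul this hBL hB hδ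
    have hpi : 0 < 1 / p := by positivity
    have hpi1 : 1 / p ≤ 1 := by rw [div_le_one hp0]; exact hp.le
    have e3 := mul_le_mul_of_nonneg_left e hpi.le
    have e4 : 1 / p * (2 * (L + G) * G * δ) ≤ 2 * (L + G) * G * δ :=
      mul_le_of_le_one_left (by positivity) hpi1
    simp only [hφ] at e3 ⊢
    nlinarith [e2, e3, e4]
  have hm2 := hm.trans key
  rw [integral_add j1 j4, integral_add j3 iconst, integral_const_mul,
    integral_sub i4 i3, setIntegral_const] at hm2
  have hm3 : 0 ≤ 1 / p * ((∫ x in K, θ x * N.F (gradient w x) ^ p) -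
      ∫ x in K, θ x * N.F (gradient v x) ^ p) +
      volume.real K • (δ * (2 * (L + G) * G + L ^ 2)) := by linarith
  have hm4 := mul_nonneg hp0.le hm3
  rw [mul_add, ← mul_assoc, mul_one_div_cancel hp0.ne', one_mul, smul_eq_mul] at hm4
  have hm5 : p * (volume.real K * (δ * (2 * (L + G) * G + L ^ 2))) ≤
      2 * (volume.real K * (δ * (2 * (L + G) * G + L ^ 2))) := by
    have : 0 ≤ volume.real K := measureReal_nonneg
    gcongr
  linarith

/-- If `p_k → 1`, `u_k` minimize the functionals `J^{p_k}`, satisfy a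
uniform a.e. gradient bound `F(∇u_k) ≤ C`, and converge locally uniformly to `u`, then
for every nonnegative cutoff `η ∈ C_c^∞(Ω)`,
`limsup_k ∫ η F(∇u_k)^{p_k} ≤ ∫ η F(∇u)`. -/
theorem statement15 (n : ℕ) (N : MinkowskiNorm n)
    (Ω : Set (En n)) (hΩ : IsOpen Ω)
    (p : ℕ → ℝ) (hp : ∀ k, 1 < p k) (hplim : Tendsto p atTop (𝓝 1))
    (u : ℕ → En n → ℝ) (hlip : ∀ k, LocLipOn (u k) Ω)
    (hmin : ∀ k, ∀ K : Set (En n), IsCompact (closure K) → closure K ⊆ Ω →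
      ∀ φ : En n → ℝ, LocLipOn φ Ω → (∀ x ∈ Ω \ K, φ x = u k x) →
        (∫ x in K, ((1 / p k) * N.F (gradient (u k) x) ^ (p k) +
            u k x * N.F (gradient (u k) x) ^ (p k))) ≤
          ∫ x in K, ((1 / p k) * N.F (gradient φ x) ^ (p k) +
            φ x * N.F (gradient (u k) x) ^ (p k)))
    (C : ℝ) (hC : ∀ k, ∀ᵐ x, x ∈ Ω → N.F (gradient (u k) x) ≤ C)
    (ulim : En n → ℝ) (hulim : LocLipOn ulim Ω)
    (hconv : TendstoLocallyUniformlyOn u ulim atTop Ω)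
    (η : En n → ℝ) (hη : IsTestFun Ω η) (hηnn : ∀ x, 0 ≤ η x) :
    limsup (fun k => ∫ x in Ω, η x * N.F (gradient (u k) x) ^ (p k)) atTop ≤
      ∫ x in Ω, η x * N.F (gradient ulim x) := by
  obtain ⟨hsm, hcs, hsub⟩ := hη
  have hK : IsCompact (tsupport η) := hcs
  have hKm : MeasurableSet (tsupport η) := hK.isClosed.measurableSet
  -- normalise the cutoff
  obtain ⟨M, hM, hηM⟩ : ∃ M : ℝ, 0 < M ∧ ∀ x, η x ≤ M := by
    obtain ⟨M, hM⟩ := hcs.exists_bound_of_continuous hsm.continuous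
    refine ⟨max M 1, by positivity, fun x => ?_⟩
    exact ((le_abs_self _).trans (hM x)).trans (le_max_left _ _)
  set θ : En n → ℝ := fun x => M⁻¹ * η x with hθdef
  have hsupp : tsupport θ = tsupport η := by
    have : Function.support θ = Function.support η := by
      ext x; simp [hθdef, hM.ne']
    rw [tsupport, tsupport, this]
  have hθt : IsTestFun Ω θ := by
    refine ⟨contDiff_const.mul hsm, ?_, by rwa [hsupp]⟩
    rw [HasCompactSupport, hsupp]; exact hcs
  have hθ0 : ∀ x, 0 ≤ θ x := fun x => mul_nonneg (inv_nonneg.2 hM.le) (hηnn x)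
  have hθ1 : ∀ x, θ x ≤ 1 := fun x => by
    have := mul_le_mul_of_nonneg_left (hηM x) (inv_nonneg.2 hM.le)
    rwa [inv_mul_cancel₀ hM.ne'] at this
  have hθl : LocLipOn θ Ω := by
    have h1 : LocallyLipschitz θ := ContDiff.locallyLipschitz (𝕂 := ℝ) (hθt.1.of_le (by simp))
    exact (locallyLipschitzOn_univ.2 h1).mono (subset_univ _)
  have hinteg : ∀ g : En n → ℝ, ∫ x in Ω, η x * g x = M * ∫ x in tsupport θ, θ x * g x := by
    intro g
    rw [← integral_const_mul, hsupp]
    have h1 : ∀ x, M * (θ x * g x) = η x * g x := fun x => by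
      simp only [hθdef]; field_simp
    simp only [h1]
    refine setIntegral_eq_of_subset_of_forall_sdiff_eq_zero hΩ.measurableSet hsub ?_
    intro x hx
    rw [image_eq_zero_of_notMem_tsupport hx.2, zero_mul]
  obtain ⟨L0, hL0⟩ := aux_grad_bdd N hΩ hK hsub hulim
  obtain ⟨G0, hG0⟩ := aux_grad_bdd N hΩ hK hsub hθl
  set L := max (max L0 C) 1
  set G := max G0 0
  have hL : 1 ≤ L := le_max_right _ _
  have hG : 0 ≤ G := le_max_right _ _
  have hLw : ∀ x ∈ tsupport θ, N.F (gradient ulim x) ≤ L := fun x hx =>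
    (hL0 x (hsupp ▸ hx)).trans ((le_max_left _ _).trans (le_max_left _ _))
  have hGθ : ∀ x ∈ tsupport θ, N.F (gradient θ x) ≤ G := fun x hx =>
    (hG0 x (hsupp ▸ hx)).trans (le_max_left _ _)
  have hLv : ∀ k, ∀ᵐ x, x ∈ Ω → N.F (gradient (u k) x) ≤ L := fun k => by
    filter_upwards [hC k] with x hx h
    exact (hx h).trans ((le_max_right _ _).trans (le_max_left _ _))
  have hp2 : ∀ᶠ k in atTop, p k ≤ 2 := hplim.eventually (eventually_le_nhds (by norm_num))
  -- convergence of the right-hand side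
  have hlim : Tendsto (fun k => ∫ x in tsupport θ, θ x * N.F (gradient ulim x) ^ (p k)) atTop
      (𝓝 (∫ x in tsupport θ, θ x * N.F (gradient ulim x))) := by
    refine tendsto_integral_filter_of_dominated_convergence (fun _ => L ^ 2) ?_ ?_ ?_ ?_
    · refine Eventually.of_forall fun k => ?_
      exact (hθt.1.continuous.measurable.mul
        (((aux_F_cont N).measurable.comp (aux_grad_meas ulim)).pow_const _)).aestronglyMeasurable
    · filter_upwards [hp2] with k hk
      rw [ae_restrict_iff' (by rwa [hsupp])]
      refine Eventually.of_forall fun x hx => ?_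
      have h0 := aux_F_nonneg N (gradient ulim x)
      have hB : 0 ≤ N.F (gradient ulim x) ^ (p k) := Real.rpow_nonneg h0 _
      rw [Real.norm_of_nonneg (mul_nonneg (hθ0 x) hB)]
      calc _ ≤ N.F (gradient ulim x) ^ (p k) := mul_le_of_le_one_left hB (hθ1 x)
        _ ≤ L ^ (p k) := Real.rpow_le_rpow h0 (hLw x hx) (by linarith [hp k])
        _ ≤ L ^ (2 : ℝ) := Real.rpow_le_rpow_of_exponent_le hL hk
        _ = L ^ 2 := by norm_num
    · exact integrableOn_const (by rw [hsupp]; exact hK.measure_lt_top.ne)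
    · refine Eventually.of_forall fun x => ?_
      have h1 : ContinuousAt (fun q : ℝ => N.F (gradient ulim x) ^ q) 1 :=
        Real.continuousAt_const_rpow' one_ne_zero
      have h2 := (h1.tendsto.comp hplim).const_mul (θ x)
      rw [Real.rpow_one] at h2
      exact h2
  have hunif : TendstoUniformlyOn u ulim atTop (tsupport θ) := by
    rw [hsupp]
    exact (tendstoLocallyUniformlyOn_iff_tendstoUniformlyOn_of_compact hK).1 (hconv.mono hsub)
  refine le_of_forall_pos_le_add fun ε hε => ?_
  refine limsup_le_of_le ?_ ?_
  · refine IsBoundedUnder.isCoboundedUnder_le ⟨0, ?_⟩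
    rw [eventually_map]
    exact Eventually.of_forall fun k => integral_nonneg fun x =>
      mul_nonneg (hηnn x) (Real.rpow_nonneg (aux_F_nonneg N _) _)
  set V := volume.real (tsupport θ)
  have hV : 0 ≤ V := measureReal_nonneg
  set D := 2 * (2 * (L + G) * G + L ^ 2) * V + 1
  have hD : 0 < D := by positivity
  set δ := min 1 (ε / (2 * M * D))
  have hδ : 0 < δ := by positivity
  have hδ1 : δ ≤ 1 := min_le_left _ _
  have hδD : M * (D * δ) ≤ ε / 2 := by
    have : δ ≤ ε / (2 * M * D) := min_le_right _ _
    rw [le_div_iff₀ (by positivity)] at this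
    linarith
  have hlim2 := hlim.eventually (eventually_le_nhds (lt_add_of_pos_right _
    (by positivity : 0 < ε / (2 * M))))
  filter_upwards [hp2, hlim2, Metric.tendstoUniformlyOn_iff.1 hunif δ hδ] with k hk2 hkl hku
  rw [hinteg, hinteg]
  have hc := aux_core N hΩ (hp k) hk2 (hlip k) hulim hθt hθ0 hθ1 (hmin k) hL hG hδ.le hδ1 (hLv k)
    hLw hGθ (fun x hx => (Real.dist_eq _ _ ▸ hku x hx).le)
  have h2 : 2 * (δ * (2 * (L + G) * G + L ^ 2)) * V ≤ D * δ := by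
    simp only [D]; nlinarith
  have h3 := mul_le_mul_of_nonneg_left (hc.trans (add_le_add hkl h2)) hM.le
  have h4 : M * (ε / (2 * M)) = ε / 2 := by field_simp
  rw [mul_add, mul_add, h4] at h3
  linarith
end
end
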